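/- For every integer n ≥ 1 there exist real constants d₁, …, d_n such that M(x) = e^{(γ-1)/√e}·x^{1/√e}·(1 + d₁/log x + ⋯ + d_n/(log x)^n + O_n(1/(log x)^{n+1})) as x → ∞. -/

import Mathlib

open Filter Real MeasureTheory
open scoped Classical

/-- The largest prime factor of `n`, with the convention `P 1 = 1`. -/
noncomputable def largestPrimeFactor (n : ℕ) : ℕ :=
  if n ≤ 1 then 1 else n.primeFactors.sup id

/-- `medianLPF x` is the median largest prime factor of the integers in `[1, x]`:
the `⌈N/2⌉`-th smallest element of the multiset `{P(n) : 1 ≤ n ≤ N}` where `N = ⌊x⌋`. -/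
noncomputable def medianLPF (x : ℝ) : ℕ :=
  (((Finset.Icc 1 ⌊x⌋₊).val.map largestPrimeFactor).sort (· ≤ ·)).getD
    ((⌊x⌋₊ + 1) / 2 - 1) 0

/-- `lif x = ∫₂^x {x/t}/log t dt`. -/
noncomputable def lif (x : ℝ) : ℝ := ∫ t in (2:ℝ)..x, Int.fract (x / t) / Real.log t

/-!
Below `(y + 1) ^ 2` an integer has at most one prime factor exceeding `y`, so the median `M` is
the least `y` for which the multiples in `[1, x]` of primes above `y` make up at most half of all
integers. The number of these multiples is `∑ ⌊x / p⌋` over the primes `y < p ≤ x`, which the prime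
number theorem with error `O(x / (log x) ^ K)` turns into `∫ ⌊x / t⌋ / log t dt` over `[y, x]`.

The inequality `3 + 4 cos θ + cos 2θ ≥ 0` keeps `ζ` away from zero for
`Re s ≥ 1 - κ / (log |t|) ^ 9`, so by Cauchy's estimate every derivative of the Dirichlet series
of `Λ - 1` grows at most like a power of `log |t|` to the right of `Re s = 1`. Mellin inversion on
`Re s = 1 + 1 / log x` then bounds Cesàro means of `(Λ n - 1) (log n) ^ k`, and the weight
`(log n) ^ k`, once removed by partial summation, supplies the saving of `(log x) ^ K`.

Substituting `t = x s` and expanding `1 / (log x + log s)` geometrically, the condition on `M` reads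
`log (log x / log M) = 1 / 2 + ∑ j < J, c_j / (log x) ^ (j + 1) + O(1 / (log x) ^ (J + 1))` with
`c_j = ∫₀¹ {1 / s} (-log s) ^ j ds` and `c_0 = 1 - γ`. Solving for `M / x ^ (1 / √e)` gives, up to
a factor `1 + O(1 / (log x) ^ J)`, an analytic function of `u = 1 / log x`, whose Taylor
coefficients at `u = 0` are the required constants.
-/

/-! ### The Euler–Maclaurin formula for `ζ` -/

section EulerMaclaurin

/-- The discrepancy `(s - 1) * (n ^ (-s) - ∫ u in n..n+1, u ^ (-s))`, the `n`-th term of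
`(s - 1) ζ(s)` after comparison with an integral. It is written without the integral so that it
is visibly entire in `s`, with no special case at `s = 1`. -/
noncomputable def zetaTailTerm (n : ℕ) (s : ℂ) : ℂ :=
  (s - 1) * (n : ℂ) ^ (-s) + ((n + 1 : ℕ) : ℂ) ^ (1 - s) - (n : ℂ) ^ (1 - s)

lemma norm_ofReal_cpow_neg_sub_le {a u : ℝ} (ha : 0 < a) (hau : a ≤ u) {s : ℂ} (hs : 0 < s.re) :
    ‖(u : ℂ) ^ (-s) - (a : ℂ) ^ (-s)‖ ≤ ‖s‖ * a ^ (-s.re - 1) * (u - a) := by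
  have hs0 : s ≠ 0 := by rintro rfl; simp at hs
  have hderiv (y : ℝ) (hy : y ∈ Set.Ici a) : HasDerivWithinAt (fun y : ℝ ↦ (y : ℂ) ^ (-s))
      (-s * (y : ℂ) ^ (-s - 1)) (Set.Ici a) y :=
    (hasDerivAt_ofReal_cpow_const (ha.trans_le hy).ne' (neg_ne_zero.mpr hs0)).hasDerivWithinAt
  have hbound (y : ℝ) (hy : y ∈ Set.Ici a) :
      ‖-s * (y : ℂ) ^ (-s - 1)‖ ≤ ‖s‖ * a ^ (-s.re - 1) := by
    rw [norm_mul, norm_neg, Complex.norm_cpow_eq_rpow_re_of_pos (ha.trans_le hy)]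
    exact mul_le_mul_of_nonneg_left
      (Real.rpow_le_rpow_of_nonpos ha hy (by simp; linarith)) (norm_nonneg _)
  simpa [Real.norm_of_nonneg (sub_nonneg.mpr hau)] using
    (convex_Ici a).norm_image_sub_le_of_norm_hasDerivWithin_le hderiv hbound
      Set.self_mem_Ici hau

lemma norm_zetaTailTerm_le {n : ℕ} (hn : n ≠ 0) {s : ℂ} (hs : 0 < s.re) :
    ‖zetaTailTerm n s‖ ≤ ‖s - 1‖ * ‖s‖ * (n : ℝ) ^ (-s.re - 1) := by
  have hn0 : (0 : ℝ) < n := by exact_mod_cast Nat.pos_of_ne_zero hn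
  by_cases h1 : s = 1
  · simp [h1, zetaTailTerm]
  let I : Set ℝ := Set.Icc n (n + 1)
  let f : ℝ → ℂ := fun y ↦ (y : ℂ) ^ (1 - s) + (s - 1) * y * (n : ℂ) ^ (-s)
  have hderiv (y : ℝ) (hy : y ∈ I) :
      HasDerivWithinAt f (-(s - 1) * ((y : ℂ) ^ (-s) - ((n : ℝ) : ℂ) ^ (-s))) I y := by
    have hpow := hasDerivAt_ofReal_cpow_const (x := y) (hn0.trans_le hy.1).ne'
      (sub_ne_zero.mpr (Ne.symm h1))
    have hlin := (((hasDerivAt_id y).ofReal_comp.const_mul (s - 1)).mul_const ((n : ℂ) ^ (-s)))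
    refine ((hpow.add hlin).congr_deriv ?_).hasDerivWithinAt
    rw [show 1 - s - 1 = -s by ring]
    push_cast
    ring
  have hbound (y : ℝ) (hy : y ∈ I) :
      ‖-(s - 1) * ((y : ℂ) ^ (-s) - ((n : ℝ) : ℂ) ^ (-s))‖ ≤
        ‖s - 1‖ * ‖s‖ * (n : ℝ) ^ (-s.re - 1) := by
    rw [norm_mul, norm_neg, mul_assoc]
    refine mul_le_mul_of_nonneg_left ?_ (norm_nonneg _)
    refine (norm_ofReal_cpow_neg_sub_le hn0 hy.1 hs).trans ?_
    exact mul_le_of_le_one_right (by positivity) (by linarith [hy.2])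
  have hmean := (convex_Icc (n : ℝ) (n + 1)).norm_image_sub_le_of_norm_hasDerivWithin_le
    hderiv hbound (Set.left_mem_Icc.mpr (by simp)) (Set.right_mem_Icc.mpr (by simp))
  rw [add_sub_cancel_left, norm_one, mul_one] at hmean
  refine le_of_eq_of_le (congrArg norm ?_) hmean
  simp only [zetaTailTerm, f]
  push_cast
  ring

lemma differentiable_zetaTailTerm {n : ℕ} (hn : n ≠ 0) : Differentiable ℂ (zetaTailTerm n) := by
  have hn' : (n : ℂ) ≠ 0 := by exact_mod_cast hn
  unfold zetaTailTerm
  fun_prop (disch := simp [hn'])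

lemma summable_nat_add_rpow (N : ℕ) {σ : ℝ} (hσ : 0 < σ) :
    Summable fun n : ℕ ↦ ((n + N : ℕ) : ℝ) ^ (-σ - 1) :=
  (summable_nat_add_iff (f := fun n : ℕ ↦ (n : ℝ) ^ (-σ - 1)) N).mpr
    (Real.summable_nat_rpow.mpr (by linarith))

lemma summable_zetaTailTerm {N : ℕ} (hN : N ≠ 0) {s : ℂ} (hs : 0 < s.re) :
    Summable fun n : ℕ ↦ zetaTailTerm (n + N) s :=
  .of_norm_bounded ((summable_nat_add_rpow N hs).mul_left (‖s - 1‖ * ‖s‖))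
    fun _ ↦ norm_zetaTailTerm_le (by omega) hs

lemma sum_range_zetaTailTerm (N M : ℕ) (s : ℂ) :
    ∑ n ∈ Finset.range M, zetaTailTerm (n + N) s =
      (s - 1) * ∑ n ∈ Finset.range M, ((n + N : ℕ) : ℂ) ^ (-s)
        + (((M + N : ℕ) : ℂ) ^ (1 - s) - (N : ℂ) ^ (1 - s)) := by
  induction M with
  | zero => simp
  | succ M ih =>
    rw [Finset.sum_range_succ, ih, Finset.sum_range_succ, zetaTailTerm, Nat.add_right_comm M 1 N]
    ring

lemma tendsto_natCast_add_cpow_zero (N : ℕ) {s : ℂ} (hs : s.re < 0) :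
    Tendsto (fun M : ℕ ↦ ((M + N : ℕ) : ℂ) ^ s) atTop (nhds 0) := by
  rw [tendsto_zero_iff_norm_tendsto_zero]
  have hreal : Tendsto (fun M : ℕ ↦ ((M + N : ℕ) : ℝ) ^ (-(-s.re))) atTop (nhds 0) :=
    (tendsto_rpow_neg_atTop (neg_pos.mpr hs)).comp
      (tendsto_natCast_atTop_atTop.comp (tendsto_add_atTop_nat N))
  refine hreal.congr' ?_
  filter_upwards [eventually_ge_atTop 1] with M hM
  rw [Complex.norm_natCast_cpow_of_pos (by omega), neg_neg]

lemma hasSum_zetaTailTerm {N : ℕ} (hN : N ≠ 0) {s : ℂ} (hs : 1 < s.re) :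
    HasSum (fun n : ℕ ↦ zetaTailTerm (n + N) s)
      ((s - 1) * ∑' n : ℕ, ((n + N : ℕ) : ℂ) ^ (-s) - (N : ℂ) ^ (1 - s)) := by
  have hsum : Summable fun n : ℕ ↦ ((n + N : ℕ) : ℂ) ^ (-s) := by
    simpa [Complex.cpow_neg] using
      (summable_nat_add_iff N).mpr (Complex.summable_one_div_nat_cpow.mpr hs)
  have htail := summable_zetaTailTerm hN (zero_lt_one.trans hs)
  have hlim := (hsum.hasSum.tendsto_sum_nat.const_mul (s - 1)).add
    ((tendsto_natCast_add_cpow_zero N (s := 1 - s) (by simpa using hs)).sub_const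
      ((N : ℂ) ^ (1 - s)))
  rw [zero_sub, ← sub_eq_add_neg] at hlim
  simp_rw [← sum_range_zetaTailTerm] at hlim
  exact (tendsto_nhds_unique htail.hasSum.tendsto_sum_nat hlim) ▸ htail.hasSum

lemma differentiableAt_tsum_zetaTailTerm {N : ℕ} (hN : N ≠ 0) {s : ℂ} (hs : 0 < s.re) :
    DifferentiableAt ℂ (fun z ↦ ∑' n : ℕ, zetaTailTerm (n + N) z) s := by
  let U : Set ℂ := {z | s.re / 2 < z.re} ∩ Metric.ball 0 (‖s‖ + 1)
  have hU : IsOpen U :=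
    (isOpen_lt continuous_const Complex.continuous_re).inter Metric.isOpen_ball
  have hsU : s ∈ U := ⟨half_lt_self hs, by simp⟩
  have hbound (n : ℕ) (w : ℂ) (hw : w ∈ U) : ‖zetaTailTerm (n + N) w‖ ≤
      (‖s‖ + 2) * (‖s‖ + 1) * ((n + N : ℕ) : ℝ) ^ (-(s.re / 2) - 1) := by
    obtain ⟨hwre : s.re / 2 < w.re, hwball⟩ := hw
    have hwnorm : ‖w‖ < ‖s‖ + 1 := by simpa using hwball
    have hwsub : ‖w - 1‖ ≤ ‖s‖ + 2 := (norm_sub_le w 1).trans (by rw [norm_one]; linarith)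
    have hone : (1 : ℝ) ≤ ((n + N : ℕ) : ℝ) := by exact_mod_cast (by omega : 1 ≤ n + N)
    refine (norm_zetaTailTerm_le (by omega) (by linarith)).trans ?_
    gcongr
  exact (Complex.differentiableOn_tsum_of_summable_norm
    ((summable_nat_add_rpow N (half_pos hs)).mul_left _)
    (fun n ↦ (differentiable_zetaTailTerm (by omega)).differentiableOn) hU hbound).differentiableAt
    (hU.mem_nhds hsU)

lemma riemannZeta₁_of_ne_one {s : ℂ} (hs : s ≠ 1) :
    riemannZeta₁ s = (s - 1) * riemannZeta s := by
  rw [riemannZeta_eq_inv_sub_mul hs, mul_inv_cancel_left₀ (sub_ne_zero.mpr hs)]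

lemma riemannZeta₁_eq_sum_add_tsum_of_one_lt_re {N : ℕ} (hN : N ≠ 0) {s : ℂ} (hs : 1 < s.re) :
    riemannZeta₁ s = (s - 1) * ∑ n ∈ Finset.Ico 1 N, (n : ℂ) ^ (-s) + (N : ℂ) ^ (1 - s)
      + ∑' n : ℕ, zetaTailTerm (n + N) s := by
  have hs1 : s ≠ 1 := by rintro rfl; simp at hs
  have hs0 : s ≠ 0 := by rintro rfl; simp at hs; linarith
  have hsplit : ∑' n : ℕ, 1 / (n : ℂ) ^ s =
      ∑ n ∈ Finset.Ico 1 N, (n : ℂ) ^ (-s) + ∑' n : ℕ, ((n + N : ℕ) : ℂ) ^ (-s) := by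
    rw [← (Complex.summable_one_div_nat_cpow.mpr hs).sum_add_tsum_nat_add N, Finset.range_eq_Ico,
      Finset.sum_eq_sum_Ico_succ_bot (Nat.pos_of_ne_zero hN)]
    simp [Complex.zero_cpow hs0, Complex.cpow_neg]
  rw [riemannZeta₁_of_ne_one hs1, zeta_eq_tsum_one_div_nat_cpow hs, hsplit,
    (hasSum_zetaTailTerm hN hs).tsum_eq]
  ring

theorem riemannZeta₁_eq_sum_add_tsum {N : ℕ} (hN : N ≠ 0) {s : ℂ} (hs : 0 < s.re) :
    riemannZeta₁ s = (s - 1) * ∑ n ∈ Finset.Ico 1 N, (n : ℂ) ^ (-s) + (N : ℂ) ^ (1 - s)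
      + ∑' n : ℕ, zetaTailTerm (n + N) s := by
  have hopen (a : ℝ) : IsOpen {z : ℂ | a < z.re} :=
    isOpen_lt continuous_const Complex.continuous_re
  have hdiff : DifferentiableOn ℂ (fun s : ℂ ↦ (s - 1) * ∑ n ∈ Finset.Ico 1 N, (n : ℂ) ^ (-s)
      + (N : ℂ) ^ (1 - s) + ∑' n : ℕ, zetaTailTerm (n + N) s) {z | 0 < z.re} := by
    intro z hz
    have hterm (n : ℕ) (hn : n ∈ Finset.Ico 1 N) : DifferentiableAt ℂ (fun s ↦ (n : ℂ) ^ (-s)) z :=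
      differentiableAt_id.neg.const_cpow
        (.inl (Nat.cast_ne_zero.mpr (by have := Finset.mem_Ico.mp hn; omega)))
    exact ((((differentiableAt_id.sub_const 1).mul (.fun_sum hterm)).add
      ((differentiableAt_id.const_sub 1).const_cpow (.inl (Nat.cast_ne_zero.mpr hN)))).add
      (differentiableAt_tsum_zetaTailTerm hN hz)).differentiableWithinAt
  refine AnalyticOnNhd.eqOn_of_preconnected_of_eventuallyEq (z₀ := 2)
    (differentiable_riemannZeta₁.differentiableOn.analyticOnNhd (hopen 0))
    (hdiff.analyticOnNhd (hopen 0)) (convex_halfSpace_re_gt 0).isPreconnected (by simp) ?_ hs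
  filter_upwards [(hopen 1).mem_nhds (by simp : (2 : ℂ) ∈ {z : ℂ | 1 < z.re})] with z hz
  exact riemannZeta₁_eq_sum_add_tsum_of_one_lt_re hN hz

end EulerMaclaurin

/-! ### Bounds for `ζ` near the line `Re s = 1` -/

section ZetaBounds

/-- The scale `log (|t| + 10)` in which `ζ`, its derivative and its inverse are measured at height
`t`; the shift by `10` keeps it above `2` at every height. -/
noncomputable def logHeight (t : ℝ) : ℝ := Real.log (|t| + 10)

lemma two_le_logHeight (t : ℝ) : 2 ≤ logHeight t := by
  have hexp : Real.exp 2 ≤ |t| + 10 := by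
    have hsq : Real.exp 2 = Real.exp 1 * Real.exp 1 := by rw [← Real.exp_add]; norm_num
    nlinarith [Real.exp_one_lt_d9, Real.exp_pos 1, abs_nonneg t]
  exact (Real.le_log_iff_exp_le (by positivity)).mpr hexp

lemma logHeight_pos (t : ℝ) : 0 < logHeight t := zero_lt_two.trans_le (two_le_logHeight t)

lemma logHeight_le_two_mul {t t' : ℝ} (h : |t'| ≤ 2 * |t| + 5) :
    logHeight t' ≤ 2 * logHeight t := by
  have hsq : 2 * logHeight t = Real.log ((|t| + 10) ^ 2) := by rw [logHeight, Real.log_pow]; rfl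
  rw [hsq]
  exact Real.log_le_log (by positivity) (by nlinarith [abs_nonneg t])

lemma abs_im_sub_one_le_of_norm_sub_le_one {s z : ℂ} (h : ‖z - s‖ ≤ 1) : |s.im| - 1 ≤ |z.im| := by
  have him := (Complex.abs_im_le_norm (z - s)).trans h
  rw [Complex.sub_im, abs_sub_comm] at him
  linarith [abs_sub_abs_le_abs_sub s.im z.im]

lemma logHeight_im_le_of_norm_sub_le_one {s z : ℂ} (h : ‖z - s‖ ≤ 1) :
    logHeight z.im ≤ 2 * logHeight s.im := by
  rw [norm_sub_rev] at h
  exact logHeight_le_two_mul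
    (by linarith [abs_im_sub_one_le_of_norm_sub_le_one h, abs_nonneg s.im])

lemma exists_logHeight_pow_le_rpow_half (m : ℕ) :
    ∃ B > 0, ∀ t : ℝ, logHeight t ^ m ≤ B * (1 + |t|) ^ (1 / 2 : ℝ) := by
  refine ⟨(2 * m + 1 : ℝ) ^ m * 10 ^ (1 / 2 : ℝ), by positivity, fun t ↦ ?_⟩
  have hpos : (0 : ℝ) < |t| + 10 := by positivity
  have hlog : logHeight t ≤ (2 * m + 1) * (|t| + 10) ^ (1 / (2 * m + 1) : ℝ) := by
    refine (Real.log_le_rpow_div hpos.le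
      (show (0 : ℝ) < 1 / (2 * m + 1) by positivity)).trans_eq ?_
    field_simp
  calc logHeight t ^ m ≤ ((2 * m + 1) * (|t| + 10) ^ (1 / (2 * m + 1) : ℝ)) ^ m := by
        gcongr; exact (logHeight_pos t).le
    _ = (2 * m + 1) ^ m * (|t| + 10) ^ (1 / (2 * m + 1) * m : ℝ) := by
        rw [mul_pow, ← Real.rpow_natCast ((|t| + 10) ^ (1 / (2 * m + 1) : ℝ)),
          ← Real.rpow_mul hpos.le]
    _ ≤ (2 * m + 1) ^ m * (|t| + 10) ^ (1 / 2 : ℝ) := by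
        gcongr
        · linarith [abs_nonneg t]
        · rw [div_mul_eq_mul_div, div_le_div_iff₀ (by positivity) (by norm_num)]
          linarith
    _ ≤ (2 * m + 1) ^ m * (10 * (1 + |t|)) ^ (1 / 2 : ℝ) := by
        gcongr; linarith [abs_nonneg t]
    _ = _ := by rw [Real.mul_rpow (by norm_num) (by positivity)]; ring

lemma rpow_one_sub_le_exp_one {u τ σ : ℝ} (hu : 1 ≤ u) (huτ : u ≤ τ) (hτ : 1 < τ)
    (hσ : 1 - 1 / Real.log τ ≤ σ) : u ^ (1 - σ) ≤ Real.exp 1 := by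
  have hlog : 0 < Real.log τ := Real.log_pos hτ
  calc u ^ (1 - σ) ≤ u ^ (1 / Real.log τ) :=
        Real.rpow_le_rpow_of_exponent_le hu (by linarith)
    _ ≤ τ ^ (1 / Real.log τ) := Real.rpow_le_rpow (by linarith) huτ (by positivity)
    _ = Real.exp 1 := by
        rw [Real.rpow_def_of_pos (by linarith), mul_one_div_cancel hlog.ne']

lemma norm_sum_natCast_cpow_neg_le {τ : ℝ} (hτ : 1 < τ) {s : ℂ}
    (hs : 1 - 1 / Real.log τ ≤ s.re) :
    ‖∑ n ∈ Finset.Ico 1 ⌊τ⌋₊, (n : ℂ) ^ (-s)‖ ≤ Real.exp 1 * (1 + Real.log τ) := by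
  have hterm (n : ℕ) (hn : n ∈ Finset.Ico 1 ⌊τ⌋₊) :
      ‖(n : ℂ) ^ (-s)‖ ≤ Real.exp 1 * (n : ℝ)⁻¹ := by
    obtain ⟨hn1, hnτ⟩ := Finset.mem_Ico.mp hn
    have hn1' : (1 : ℝ) ≤ n := by exact_mod_cast hn1
    have hnτ' : (n : ℝ) ≤ τ := (Nat.le_floor_iff (by linarith)).mp hnτ.le
    have hexp : (n : ℝ) ^ (-s).re = (n : ℝ) ^ (1 - s.re) * (n : ℝ)⁻¹ := by
      rw [← Real.rpow_neg_one (n : ℝ), ← Real.rpow_add (by linarith), Complex.neg_re]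
      ring_nf
    rw [Complex.norm_natCast_cpow_of_pos hn1, hexp]
    gcongr
    exact rpow_one_sub_le_exp_one hn1' hnτ' hτ hs
  have hharmonic : ∑ n ∈ Finset.Ico 1 ⌊τ⌋₊, (n : ℝ)⁻¹ ≤ 1 + Real.log τ := by
    refine le_trans ?_ (harmonic_floor_le_one_add_log τ hτ.le)
    rw [harmonic_eq_sum_Icc]
    push_cast
    exact Finset.sum_le_sum_of_subset_of_nonneg Finset.Ico_subset_Icc_self
      fun _ _ _ ↦ by positivity
  calc _ ≤ ∑ n ∈ Finset.Ico 1 ⌊τ⌋₊, Real.exp 1 * (n : ℝ)⁻¹ := norm_sum_le_of_le _ hterm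
    _ ≤ _ := by rw [← Finset.mul_sum]; gcongr

lemma tsum_nat_add_rpow_le {N : ℕ} (hN : 2 ≤ N) {σ : ℝ} (hσ : 0 < σ) :
    ∑' n : ℕ, ((n + N : ℕ) : ℝ) ^ (-σ - 1) ≤ ((N : ℝ) - 1) ^ (-σ) / σ := by
  have hN' : (1 : ℝ) ≤ N - 1 := by
    have : (2 : ℝ) ≤ N := by exact_mod_cast hN
    linarith
  refine Real.tsum_le_of_sum_range_le (fun n ↦ by positivity) fun M ↦ ?_
  have hanti : AntitoneOn (fun u : ℝ ↦ u ^ (-σ - 1)) (Set.Icc (N - 1) (N - 1 + M)) :=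
    fun a ha b _ hab ↦ Real.rpow_le_rpow_of_nonpos (by linarith [ha.1]) hab (by linarith)
  have hzero : (0 : ℝ) ∉ Set.uIcc (N - 1 : ℝ) (N - 1 + M) := by
    rw [Set.uIcc_of_le (by simp)]
    exact fun h ↦ by linarith [h.1]
  calc ∑ n ∈ Finset.range M, ((n + N : ℕ) : ℝ) ^ (-σ - 1)
      = ∑ n ∈ Finset.range M, ((N : ℝ) - 1 + (n + 1 : ℕ)) ^ (-σ - 1) := by
        refine Finset.sum_congr rfl fun n _ ↦ ?_
        push_cast
        ring_nf
    _ ≤ ∫ u in ((N : ℝ) - 1)..(N - 1 + M), u ^ (-σ - 1) := hanti.sum_le_integral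
    _ = (((N : ℝ) - 1) ^ (-σ) - (N - 1 + M) ^ (-σ)) / σ := by
        rw [integral_rpow (.inr ⟨by linarith, hzero⟩), sub_add_cancel, div_neg, ← neg_div, neg_sub]
    _ ≤ _ := by gcongr; exact sub_le_self _ (by positivity)

lemma norm_tsum_zetaTailTerm_le {τ : ℝ} (hτ : 11 ≤ τ) {s : ℂ} (hs : ‖s‖ ≤ τ)
    (hhalf : 1 / 2 ≤ s.re) (hre : 1 - 1 / Real.log τ ≤ s.re) :
    ‖∑' n : ℕ, zetaTailTerm (n + ⌊τ⌋₊) s‖ ≤ ‖s - 1‖ * (4 * Real.exp 1) := by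
  set N : ℕ := ⌊τ⌋₊
  have hs0 : 0 < s.re := by linarith
  have hNle : (N : ℝ) ≤ τ := Nat.floor_le (by linarith)
  have hNgt : τ < N + 1 := Nat.lt_floor_add_one τ
  have hN2 : 2 ≤ N := by exact_mod_cast (by linarith : (2 : ℝ) ≤ N)
  have hnum : ((N : ℝ) - 1) ^ (1 - s.re) ≤ Real.exp 1 :=
    rpow_one_sub_le_exp_one (by linarith) (by linarith) (by linarith) hre
  have hden : τ / 4 ≤ ((N : ℝ) - 1) * s.re := by nlinarith
  have htail : ((N : ℝ) - 1) ^ (-s.re) / s.re ≤ Real.exp 1 / (τ / 4) := by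
    have hsub : ((N : ℝ) - 1) ^ (-s.re) = ((N : ℝ) - 1) ^ (1 - s.re) / ((N : ℝ) - 1) := by
      rw [← Real.rpow_sub_one (by linarith)]
      ring_nf
    rw [hsub, div_div]
    gcongr
  calc ‖∑' n : ℕ, zetaTailTerm (n + N) s‖
      ≤ ∑' n : ℕ, ‖s - 1‖ * ‖s‖ * ((n + N : ℕ) : ℝ) ^ (-s.re - 1) :=
        tsum_of_norm_bounded ((summable_nat_add_rpow N hs0).mul_left _).hasSum
          fun n ↦ norm_zetaTailTerm_le (by omega) hs0
    _ ≤ ‖s - 1‖ * τ * (Real.exp 1 / (τ / 4)) := by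
        rw [tsum_mul_left]
        gcongr
        exact (tsum_nat_add_rpow_le hN2 hs0).trans htail
    _ = _ := by field_simp

lemma ne_one_of_im_ne_zero {s : ℂ} (hs : s.im ≠ 0) : s ≠ 1 := by
  rintro rfl
  simp at hs

/-- Cutting the Euler–Maclaurin formula at `N ≈ |Im s|` balances the head against the tail. -/
theorem norm_riemannZeta_le {s : ℂ} (him : 1 ≤ |s.im|) (hre : 1 - 1 / logHeight s.im ≤ s.re)
    (hre3 : s.re ≤ 3) : ‖riemannZeta s‖ ≤ 7 * Real.exp 1 * logHeight s.im := by
  have hL := two_le_logHeight s.im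
  have hhalf : 1 / 2 ≤ s.re := by
    linarith [one_div_le_one_div_of_le (by norm_num) hL]
  unfold logHeight at hre hL ⊢
  set τ : ℝ := |s.im| + 10
  have hτ : 11 ≤ τ := by linarith
  have hN : ⌊τ⌋₊ ≠ 0 := (Nat.floor_pos.mpr (by linarith)).ne'
  have hs1 : s ≠ 1 := ne_one_of_im_ne_zero (abs_pos.mp (by linarith))
  have hsub : 1 ≤ ‖s - 1‖ := him.trans (by simpa using Complex.abs_im_le_norm (s - 1))
  have hnorm : ‖s‖ ≤ τ := by
    have := Complex.norm_le_abs_re_add_abs_im s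
    rw [abs_of_nonneg (by linarith : 0 ≤ s.re)] at this
    linarith
  have hhead := norm_sum_natCast_cpow_neg_le (by linarith) hre
  have hmid : ‖(⌊τ⌋₊ : ℂ) ^ (1 - s)‖ ≤ Real.exp 1 := by
    rw [Complex.norm_natCast_cpow_of_pos (Nat.pos_of_ne_zero hN)]
    simpa using rpow_one_sub_le_exp_one (Nat.one_le_cast.mpr (Nat.one_le_iff_ne_zero.mpr hN))
      (Nat.floor_le (by linarith)) (by linarith) hre
  have htail := norm_tsum_zetaTailTerm_le hτ hnorm hhalf hre
  refine le_of_mul_le_mul_left (a := ‖s - 1‖) ?_ (by linarith)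
  calc ‖s - 1‖ * ‖riemannZeta s‖
      ≤ ‖s - 1‖ * (Real.exp 1 * (1 + Real.log τ)) + Real.exp 1 + ‖s - 1‖ * (4 * Real.exp 1) := by
        rw [← norm_mul, ← riemannZeta₁_of_ne_one hs1, riemannZeta₁_eq_sum_add_tsum hN (by linarith)]
        refine norm_add₃_le.trans ?_
        rw [norm_mul]
        gcongr
    _ ≤ ‖s - 1‖ * (Real.exp 1 * (6 + Real.log τ)) := by
        nlinarith [mul_le_mul_of_nonneg_right hsub (Real.exp_pos 1).le]
    _ ≤ ‖s - 1‖ * (7 * Real.exp 1 * Real.log τ) := by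
        refine mul_le_mul_of_nonneg_left ?_ (norm_nonneg _)
        nlinarith [Real.exp_pos 1]

theorem norm_deriv_riemannZeta_le {s : ℂ} (him : 2 ≤ |s.im|)
    (hre : 1 - 1 / (4 * logHeight s.im) ≤ s.re) (hre2 : s.re ≤ 2) :
    ‖deriv riemannZeta s‖ ≤ 56 * Real.exp 1 * logHeight s.im ^ 2 := by
  have hL := two_le_logHeight s.im
  set L := logHeight s.im
  set r := 1 / (4 * L) with hr
  have hr0 : 0 < r := by positivity
  have hr1 : r ≤ 1 / 8 := one_div_le_one_div_of_le (by norm_num) (by linarith)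
  have him_ge {z : ℂ} (hz : ‖z - s‖ ≤ r) : 1 ≤ |z.im| := by
    linarith [abs_im_sub_one_le_of_norm_sub_le_one (hz.trans (by linarith))]
  have hdiff : DifferentiableOn ℂ riemannZeta (closure (Metric.ball s r)) := by
    rw [closure_ball _ hr0.ne']
    intro z hz
    have hz_im := him_ge (mem_closedBall_iff_norm.mp hz)
    exact (differentiableAt_riemannZeta
      (ne_one_of_im_ne_zero (abs_pos.mp (by linarith)))).differentiableWithinAt
  have hbound (z : ℂ) (hz : z ∈ Metric.sphere s r) :
      ‖riemannZeta z‖ ≤ 7 * Real.exp 1 * (2 * L) := by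
    have hz' : ‖z - s‖ ≤ r := (mem_sphere_iff_norm.mp hz).le
    have hLz := logHeight_im_le_of_norm_sub_le_one (hz'.trans (by linarith))
    have hinv : 1 / (2 * L) ≤ 1 / logHeight z.im := one_div_le_one_div_of_le (logHeight_pos _) hLz
    have htwo : 1 / (2 * L) = 2 * r := by rw [hr]; field_simp; norm_num
    have hzre := abs_le.mp ((Complex.abs_re_le_norm (z - s)).trans hz')
    rw [Complex.sub_re] at hzre
    refine (norm_riemannZeta_le (him_ge hz') (by linarith) (by linarith)).trans ?_
    gcongr
  refine (Complex.norm_deriv_le_of_forall_mem_sphere_norm_le hr0 hdiff.diffContOnCl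
    hbound).trans_eq ?_
  rw [hr]
  field_simp
  norm_num

end ZetaBounds

/-! ### A zero-free region -/

section ZeroFreeRegion

lemma exists_norm_riemannZeta_one_add_le :
    ∃ K > 0, ∀ x : ℝ, 0 < x → x ≤ 1 → ‖riemannZeta (1 + x)‖ ≤ K / x := by
  have hcont : Continuous fun x : ℝ ↦ riemannZeta₁ (1 + x) :=
    differentiable_riemannZeta₁.continuous.comp (by fun_prop)
  obtain ⟨K, hK⟩ := (isCompact_Icc (a := (0 : ℝ)) (b := 1)).exists_bound_of_continuousOn
    hcont.continuousOn
  have hK0 : 0 ≤ K := (norm_nonneg _).trans (hK 0 (by simp))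
  refine ⟨K + 1, by linarith, fun x hx hx1 ↦ ?_⟩
  have hbound := hK x ⟨hx.le, hx1⟩
  rw [riemannZeta₁_of_ne_one (by simpa using hx.ne'), add_sub_cancel_left, norm_mul,
    Complex.norm_real, Real.norm_of_nonneg hx.le] at hbound
  rw [le_div_iff₀ hx]
  linarith

/-- The inequality `3 + 4 cos θ + cos 2θ ≥ 0`, in the form
`1 ≤ ‖ζ(σ)³ ζ(σ + it)⁴ ζ(σ + 2it)‖`, bounds `ζ` from below just to the right of `Re s = 1`. -/
lemma exists_le_norm_riemannZeta_pow_four :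
    ∃ c > 0, ∀ s : ℂ, 2 ≤ |s.im| → 1 < s.re → s.re ≤ 2 →
      c * (s.re - 1) ^ 3 / logHeight s.im ≤ ‖riemannZeta s‖ ^ 4 := by
  obtain ⟨K, hK, hpole⟩ := exists_norm_riemannZeta_one_add_le
  refine ⟨1 / (K ^ 3 * (14 * Real.exp 1)), by positivity, fun s him hre hre2 ↦ ?_⟩
  set x := s.re - 1 with hx
  have hx0 : 0 < x := sub_pos.mpr hre
  have hL := logHeight_pos s.im
  have hproduct := DirichletCharacter.norm_LFunction_product_ge_one (N := 1) 1 hx0 s.im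
  simp only [DirichletCharacter.LFunctionTrivChar, DirichletCharacter.LFunction_modOne_eq,
    norm_mul, norm_pow] at hproduct
  set w : ℂ := 1 + x + 2 * Complex.I * s.im
  have hs : (1 + x + Complex.I * s.im : ℂ) = s := by apply Complex.ext <;> simp [hx]
  have hwre : w.re = s.re := by simp [w, hx]
  have hwim : |w.im| = 2 * |s.im| := by simp [w, abs_mul]
  have hdouble : ‖riemannZeta w‖ ≤ 7 * Real.exp 1 * (2 * logHeight s.im) := by
    have hinv : 0 < 1 / logHeight w.im := one_div_pos.mpr (logHeight_pos _)
    refine (norm_riemannZeta_le (by linarith) (by linarith) (by linarith)).trans ?_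
    gcongr
    exact logHeight_le_two_mul (by linarith)
  have hlower : 1 ≤ (K / x) ^ 3 * ‖riemannZeta s‖ ^ 4 *
      (7 * Real.exp 1 * (2 * logHeight s.im)) := by
    rw [hs] at hproduct
    refine hproduct.le.trans ?_
    gcongr
    exact hpole x hx0 (by linarith)
  calc 1 / (K ^ 3 * (14 * Real.exp 1)) * x ^ 3 / logHeight s.im
      = 1 / ((K / x) ^ 3 * (7 * Real.exp 1 * (2 * logHeight s.im))) := by field_simp; norm_num
    _ ≤ ‖riemannZeta s‖ ^ 4 := by
        rw [div_le_iff₀ (by positivity)]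
        linarith

lemma exists_le_norm_riemannZeta_of_one_add_le {D : ℝ} (hD : 0 < D) :
    ∃ κ : ℝ, 0 < κ ∧ κ ≤ 1 ∧ ∀ s : ℂ, 2 ≤ |s.im| → 1 + κ / logHeight s.im ^ 9 ≤ s.re →
      s.re ≤ 2 → D * κ / logHeight s.im ^ 7 ≤ ‖riemannZeta s‖ := by
  obtain ⟨c, hc, hpow⟩ := exists_le_norm_riemannZeta_pow_four
  obtain ⟨κ, hκ0, hκ1, hκ⟩ : ∃ κ : ℝ, 0 < κ ∧ κ ≤ 1 ∧ D ^ 4 * κ ≤ c :=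
    ⟨min 1 (c / D ^ 4), by positivity, min_le_left _ _,
      (le_div_iff₀' (by positivity)).mp (min_le_right _ _)⟩
  refine ⟨κ, hκ0, hκ1, fun s him hre hre2 ↦ ?_⟩
  have hL := logHeight_pos s.im
  set L := logHeight s.im
  have hη : 0 < κ / L ^ 9 := by positivity
  refine le_of_pow_le_pow_left₀ (n := 4) (by norm_num) (norm_nonneg _) ?_
  calc (D * κ / L ^ 7) ^ 4 = D ^ 4 * κ * κ ^ 3 / L ^ 28 := by ring
    _ ≤ c * κ ^ 3 / L ^ 28 := by gcongr
    _ = c * (κ / L ^ 9) ^ 3 / L := by field_simp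
    _ ≤ c * (s.re - 1) ^ 3 / L := by gcongr; linarith
    _ ≤ _ := hpow s him (by linarith) hre2

lemma norm_riemannZeta_sub_le {s w : ℂ} (him : w.im = s.im) (hs : 2 ≤ |s.im|)
    (hsre : 1 - 1 / (4 * logHeight s.im) ≤ s.re) (hsw : s.re ≤ w.re) (hwre : w.re ≤ 2) :
    ‖riemannZeta w - riemannZeta s‖ ≤ 56 * Real.exp 1 * logHeight s.im ^ 2 * (w.re - s.re) := by
  let S : Set ℂ := {z | s.re ≤ z.re} ∩ {z | z.re ≤ w.re} ∩ {z | z.im = s.im}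
  have hconv : Convex ℝ S :=
    ((convex_halfSpace_re_ge _).inter (convex_halfSpace_re_le _)).inter
      (convex_hyperplane Complex.imCLM.isLinear _)
  have hdiff (z : ℂ) (hz : z ∈ S) : DifferentiableAt ℂ riemannZeta z :=
    differentiableAt_riemannZeta (ne_one_of_im_ne_zero (hz.2 ▸ abs_pos.mp (by linarith)))
  have hderiv (z : ℂ) (hz : z ∈ S) :
      ‖deriv riemannZeta z‖ ≤ 56 * Real.exp 1 * logHeight s.im ^ 2 := by
    obtain ⟨⟨hzs : s.re ≤ z.re, hzw : z.re ≤ w.re⟩, hzim : z.im = s.im⟩ := hz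
    rw [← hzim] at hsre hs ⊢
    exact norm_deriv_riemannZeta_le hs (hsre.trans hzs) (hzw.trans hwre)
  have hdist : ‖w - s‖ = w.re - s.re := by
    have : w - s = ((w.re - s.re : ℝ) : ℂ) := by apply Complex.ext <;> simp [him]
    rw [this, Complex.norm_real, Real.norm_of_nonneg (sub_nonneg.mpr hsw)]
  rw [← hdist]
  exact hconv.norm_image_sub_le_of_norm_deriv_le hdiff hderiv
    ⟨⟨le_refl s.re, hsw⟩, rfl⟩ ⟨⟨hsw, le_refl w.re⟩, him⟩

lemma div_logHeight_pow_nine_le {κ : ℝ} (hκ : κ ≤ 1) (t : ℝ) :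
    κ / logHeight t ^ 9 ≤ 1 / (4 * logHeight t) := by
  have hL := two_le_logHeight t
  have hpow : 4 * logHeight t ≤ logHeight t ^ 9 := by
    calc 4 * logHeight t ≤ 2 ^ 8 * logHeight t := by gcongr; norm_num
      _ ≤ logHeight t ^ 8 * logHeight t := by gcongr
      _ = logHeight t ^ 9 := by ring
  gcongr

/-- The lower bound at `Re s = 1 + κ / L ^ 9` propagates to its left because `ζ' = O(L ^ 2)`. -/
theorem exists_le_norm_riemannZeta : ∃ κ c : ℝ, 0 < κ ∧ κ ≤ 1 ∧ 0 < c ∧ ∀ s : ℂ, 2 ≤ |s.im| →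
    1 - κ / logHeight s.im ^ 9 ≤ s.re → s.re ≤ 2 → c / logHeight s.im ^ 7 ≤ ‖riemannZeta s‖ := by
  set D := 56 * Real.exp 1
  have hD0 : 0 < D := by positivity
  obtain ⟨κ, hκ0, hκ1, hright⟩ := exists_le_norm_riemannZeta_of_one_add_le (D := 3 * D)
    (by positivity)
  refine ⟨κ, D * κ, hκ0, hκ1, by positivity, fun s him hre hre2 ↦ ?_⟩
  have hL := two_le_logHeight s.im
  have hηL := div_logHeight_pow_nine_le hκ1 s.im
  set L := logHeight s.im
  set η := κ / L ^ 9 with hη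
  have : 0 < η := by positivity
  have hη1 : η ≤ 1 := hηL.trans (by rw [div_le_one (by positivity)]; linarith)
  have hscale : 3 * D * κ / L ^ 7 = D * κ / L ^ 7 + D * L ^ 2 * (2 * η) := by
    rw [hη]
    field_simp
    ring
  have hstep : 0 ≤ D * L ^ 2 * (2 * η) := by positivity
  rcases le_total (1 + η) s.re with hcase | hcase
  · linarith [hright s him hcase hre2]
  · set w : ℂ := ⟨1 + η, s.im⟩
    have hw : 3 * D * κ / L ^ 7 ≤ ‖riemannZeta w‖ :=
      hright w him le_rfl (show 1 + η ≤ 2 by linarith)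
    have hdiff : ‖riemannZeta w - riemannZeta s‖ ≤ D * L ^ 2 * (1 + η - s.re) :=
      norm_riemannZeta_sub_le rfl him (by linarith) hcase (show 1 + η ≤ 2 by linarith)
    have hwidth : D * L ^ 2 * (1 + η - s.re) ≤ D * L ^ 2 * (2 * η) := by gcongr; linarith
    linarith [norm_sub_norm_le (riemannZeta w) (riemannZeta s)]

end ZeroFreeRegion

/-! ### The Dirichlet series of `Λ - 1` -/

section ZetaDefect

/-- The extension analytic at `1` of `-ζ'/ζ - ζ`, the Dirichlet series of `Λ - 1`. The poles of both
summands at `s = 1` cancel, which `riemannZeta₁ s = (s - 1) ζ(s)` and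
`riemannZeta₀ s = ζ(s) - (s - 1)⁻¹` make explicit. -/
noncomputable def zetaDefect (s : ℂ) : ℂ := -logDeriv riemannZeta₁ s - riemannZeta₀ s

lemma zetaDefect_eq {s : ℂ} (hs : s ≠ 1) (hζ : riemannZeta s ≠ 0) :
    zetaDefect s = -deriv riemannZeta s / riemannZeta s - riemannZeta s := by
  have hs' : s - 1 ≠ 0 := sub_ne_zero.mpr hs
  have hζ₁ : riemannZeta₁ s ≠ 0 := by
    rw [riemannZeta₁_of_ne_one hs]
    exact mul_ne_zero hs' hζ
  have hlog : deriv riemannZeta s / riemannZeta s = logDeriv riemannZeta₁ s - (s - 1)⁻¹ := by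
    rw [deriv_riemannZeta_eq_neg_inv_sub_sq_mul_add hs, riemannZeta_eq_inv_sub_mul hs,
      logDeriv_apply]
    field_simp
    ring
  rw [zetaDefect, neg_div, hlog, riemannZeta_eq_inv_sub_add hs]
  ring

lemma riemannZeta₁_ne_zero_of_one_le_re {s : ℂ} (hs : 1 ≤ s.re) : riemannZeta₁ s ≠ 0 := by
  by_cases h : s = 1
  · simp [h]
  · rw [riemannZeta₁_of_ne_one h]
    exact mul_ne_zero (sub_ne_zero.mpr h) (riemannZeta_ne_zero_of_one_le_re hs)

lemma analyticOnNhd_zetaDefect : AnalyticOnNhd ℂ zetaDefect {s | riemannZeta₁ s ≠ 0} := by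
  intro s hs
  have h₁ := differentiable_riemannZeta₁.analyticAt s
  exact (h₁.deriv.div h₁ hs).neg.sub (differentiable_riemannZeta₀.analyticAt s)

lemma exists_norm_zetaDefect_le : ∃ κ C : ℝ, 0 < κ ∧ κ ≤ 1 ∧ 0 < C ∧ ∀ s : ℂ, 2 ≤ |s.im| →
    1 - κ / logHeight s.im ^ 9 ≤ s.re → s.re ≤ 2 →
      riemannZeta₁ s ≠ 0 ∧ ‖zetaDefect s‖ ≤ C * logHeight s.im ^ 9 := by
  obtain ⟨κ, c, hκ0, hκ1, hc, hlower⟩ := exists_le_norm_riemannZeta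
  refine ⟨κ, 56 * Real.exp 1 / c + 7 * Real.exp 1, hκ0, hκ1, by positivity,
    fun s him hre hre2 ↦ ?_⟩
  have hL := two_le_logHeight s.im
  have hη := div_logHeight_pow_nine_le hκ1 s.im
  have hζ_lower := hlower s him hre hre2
  have hs1 : s ≠ 1 := ne_one_of_im_ne_zero (abs_pos.mp (by linarith))
  set L := logHeight s.im
  have hquarter : 1 / (4 * L) ≤ 1 / L := one_div_le_one_div_of_le (by linarith) (by linarith)
  have hζ0 : riemannZeta s ≠ 0 := norm_pos_iff.mp (lt_of_lt_of_le (by positivity) hζ_lower)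
  refine ⟨by rw [riemannZeta₁_of_ne_one hs1]; exact mul_ne_zero (sub_ne_zero.mpr hs1) hζ0, ?_⟩
  rw [zetaDefect_eq hs1 hζ0]
  calc ‖-deriv riemannZeta s / riemannZeta s - riemannZeta s‖
      ≤ ‖deriv riemannZeta s‖ / ‖riemannZeta s‖ + ‖riemannZeta s‖ := by
        rw [← norm_neg (deriv _ _), ← norm_div]
        exact norm_sub_le _ _
    _ ≤ 56 * Real.exp 1 * L ^ 2 / (c / L ^ 7) + 7 * Real.exp 1 * L := by
        gcongr
        · exact norm_deriv_riemannZeta_le him (by linarith) hre2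
        · exact norm_riemannZeta_le (by linarith) (by linarith) (by linarith)
    _ ≤ 56 * Real.exp 1 * L ^ 2 / (c / L ^ 7) + 7 * Real.exp 1 * L ^ 9 := by
        gcongr
        exact le_self_pow₀ (by linarith) (by norm_num)
    _ = _ := by field_simp

lemma exists_norm_iteratedDeriv_zetaDefect_le_logHeight_pow (k : ℕ) :
    ∃ C > 0, ∃ m : ℕ, ∀ s : ℂ, 3 ≤ |s.im| → 1 ≤ s.re → s.re ≤ 3 / 2 →
      ‖iteratedDeriv k zetaDefect s‖ ≤ C * logHeight s.im ^ m := by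
  obtain ⟨κ, C, hκ0, hκ1, hC, hbound⟩ := exists_norm_zetaDefect_le
  refine ⟨k.factorial * (C * 2 ^ 9) / (κ / 2 ^ 9) ^ k, by positivity, 9 + 9 * k,
    fun s him hre hre2 ↦ ?_⟩
  have hL := two_le_logHeight s.im
  set L := logHeight s.im
  set r := κ / (2 * L) ^ 9 with hr
  have hr0 : 0 < r := by positivity
  have hr1 : r ≤ 1 / 2 := by
    have hpow : (2 : ℝ) ≤ (2 * L) ^ 9 := by
      calc (2 : ℝ) ≤ 2 ^ 9 := by norm_num
        _ ≤ (2 * L) ^ 9 := by gcongr; linarith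
    rw [hr]
    gcongr
  have hnear (z : ℂ) (hz : ‖z - s‖ ≤ r) :
      riemannZeta₁ z ≠ 0 ∧ ‖zetaDefect z‖ ≤ C * (2 * L) ^ 9 := by
    have hz1 : ‖z - s‖ ≤ 1 := by linarith
    have hLz : logHeight z.im ≤ 2 * L := logHeight_im_le_of_norm_sub_le_one hz1
    have hLz0 := logHeight_pos z.im
    have hzre := abs_le.mp ((Complex.abs_re_le_norm (z - s)).trans hz)
    rw [Complex.sub_re] at hzre
    have hrz : r ≤ κ / logHeight z.im ^ 9 := by rw [hr]; gcongr
    obtain ⟨hne, hle⟩ := hbound z (by linarith [abs_im_sub_one_le_of_norm_sub_le_one hz1])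
      (by linarith) (by linarith)
    exact ⟨hne, hle.trans (by gcongr)⟩
  have hdiff : DifferentiableOn ℂ zetaDefect (closure (Metric.ball s r)) := by
    rw [closure_ball _ hr0.ne']
    exact fun z hz ↦ (analyticOnNhd_zetaDefect z
      (hnear z (mem_closedBall_iff_norm.mp hz)).1).differentiableAt.differentiableWithinAt
  refine (Complex.norm_iteratedDeriv_le_of_forall_mem_sphere_norm_le k hr0 hdiff.diffContOnCl
    fun z hz ↦ (hnear z (mem_sphere_iff_norm.mp hz).le).2).trans_eq ?_
  have hradius : r = (κ / 2 ^ 9) / L ^ 9 := by rw [hr, mul_pow]; field_simp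
  rw [hradius, div_pow, pow_add, pow_mul]
  field_simp

lemma continuousOn_iteratedDeriv_zetaDefect (k : ℕ) :
    ContinuousOn (iteratedDeriv k zetaDefect) {s | 1 ≤ s.re} := by
  have hanalytic := analyticOnNhd_zetaDefect.iterated_deriv k
  rw [← iteratedDeriv_eq_iterate] at hanalytic
  exact hanalytic.continuousOn.mono fun s hs ↦ riemannZeta₁_ne_zero_of_one_le_re hs

theorem exists_norm_iteratedDeriv_zetaDefect_le (k : ℕ) :
    ∃ C > 0, ∀ s : ℂ, 1 ≤ s.re → s.re ≤ 3 / 2 →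
      ‖iteratedDeriv k zetaDefect s‖ ≤ C * (1 + |s.im|) ^ (1 / 2 : ℝ) := by
  obtain ⟨C, hC, m, hlarge⟩ := exists_norm_iteratedDeriv_zetaDefect_le_logHeight_pow k
  obtain ⟨B, hB, hpow⟩ := exists_logHeight_pow_le_rpow_half m
  obtain ⟨K, hK⟩ := ((isCompact_Icc (a := (1 : ℝ)) (b := 3 / 2)).reProdIm
    (isCompact_Icc (a := (-3 : ℝ)) (b := 3))).exists_bound_of_continuousOn
    ((continuousOn_iteratedDeriv_zetaDefect k).mono fun s hs ↦ hs.1.1)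
  refine ⟨C * B + |K|, by positivity, fun s hre hre2 ↦ ?_⟩
  have hgrow : 1 ≤ (1 + |s.im|) ^ (1 / 2 : ℝ) :=
    Real.one_le_rpow (by linarith [abs_nonneg s.im]) (by norm_num)
  rw [add_mul]
  rcases le_total 3 |s.im| with him | him
  · refine le_add_of_le_of_nonneg ?_ (by positivity)
    rw [mul_assoc]
    exact (hlarge s him hre hre2).trans (mul_le_mul_of_nonneg_left (hpow s.im) hC.le)
  · refine le_add_of_nonneg_of_le (by positivity) ?_
    exact (hK s ⟨⟨hre, hre2⟩, abs_le.mp him⟩).trans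
      ((le_abs_self K).trans (le_mul_of_one_le_right (abs_nonneg K) hgrow))

end ZetaDefect

/-! ### Smoothed sums as vertical integrals -/

section SmoothedSums

open scoped ArithmeticFunction.vonMangoldt

/-- The kernel `u ↦ max 0 (1 - u)` of first-order Cesàro smoothing. It is complex valued so that
its Mellin transform can be inverted. -/
noncomputable def cesaroKernel (u : ℝ) : ℂ := ((max 0 (1 - u) : ℝ) : ℂ)

lemma continuous_cesaroKernel : Continuous cesaroKernel := by unfold cesaroKernel; fun_prop

lemma cesaroKernel_eq_indicator_sub {u : ℝ} (hu : 0 < u) :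
    cesaroKernel u = (Set.Ioc 0 1).indicator (fun _ ↦ (1 : ℂ)) u -
      (Set.Ioc 0 1).indicator (fun t : ℝ ↦ (t : ℂ) ^ (1 : ℂ)) u := by
  rcases le_or_gt u 1 with h | h
  · simp [cesaroKernel, hu, h]
  · simp [cesaroKernel, h.le, h]

lemma hasMellin_cesaroKernel {s : ℂ} (hs : 0 < s.re) :
    HasMellin cesaroKernel s (1 / (s * (s + 1))) := by
  have hs0 : s ≠ 0 := by rintro rfl; simp at hs
  have hs1_re : 0 < (s + 1).re := by simpa using by linarith
  have hs1 : s + 1 ≠ 0 := by intro h; simp [h] at hs1_re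
  have hone := hasMellin_one_Ioc hs
  have hid := hasMellin_cpow_Ioc (1 : ℂ) hs1_re
  have hsub := hasMellin_sub hone.1 hid.1
  rw [hone.2, hid.2, show 1 / s - 1 / (s + 1) = 1 / (s * (s + 1)) by field_simp; ring] at hsub
  have hcongr : Set.EqOn
      (fun t : ℝ ↦ (t : ℂ) ^ (s - 1) • ((Set.Ioc 0 1).indicator (fun _ ↦ (1 : ℂ)) t -
        (Set.Ioc 0 1).indicator (fun t : ℝ ↦ (t : ℂ) ^ (1 : ℂ)) t))
      (fun t ↦ (t : ℂ) ^ (s - 1) • cesaroKernel t) (Set.Ioi 0) :=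
    fun t ht ↦ by simp only [cesaroKernel_eq_indicator_sub ht]
  exact ⟨(integrableOn_congr_fun hcongr measurableSet_Ioi).mp hsub.1,
    (setIntegral_congr_fun measurableSet_Ioi hcongr).symm.trans hsub.2⟩

lemma half_one_add_abs_im_le_norm {s : ℂ} (hs : 1 ≤ s.re) : (1 + |s.im|) / 2 ≤ ‖s‖ := by
  linarith [(le_abs_self s.re).trans (Complex.abs_re_le_norm s), Complex.abs_im_le_norm s]

lemma norm_one_div_mul_add_one_le {s : ℂ} (hs : 1 ≤ s.re) :
    ‖1 / (s * (s + 1))‖ ≤ 4 * (1 + |s.im|) ^ (-2 : ℝ) := by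
  have h₀ := half_one_add_abs_im_le_norm hs
  have h₁ : (1 + |s.im|) / 2 ≤ ‖s + 1‖ := by
    simpa using half_one_add_abs_im_le_norm (s := s + 1) (by simp; linarith)
  rw [norm_div, norm_mul, norm_one, Real.rpow_neg (by positivity), Real.rpow_two]
  calc 1 / (‖s‖ * ‖s + 1‖) ≤ 1 / ((1 + |s.im|) / 2 * ((1 + |s.im|) / 2)) := by gcongr
    _ = 4 * ((1 + |s.im|) ^ 2)⁻¹ := by field_simp; norm_num

lemma integrable_one_add_abs_rpow_neg {r : ℝ} (hr : 1 < r) :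
    Integrable (fun y : ℝ ↦ (1 + |y|) ^ (-r)) := by
  simpa using integrable_one_add_norm (E := ℝ) (μ := volume) (r := r) (by simpa using hr)

lemma verticalIntegrable_one_div_mul_add_one {σ : ℝ} (hσ : 1 ≤ σ) :
    Complex.VerticalIntegrable (fun s ↦ 1 / (s * (s + 1))) σ := by
  have hne (y : ℝ) : (σ + y * Complex.I : ℂ) * (σ + y * Complex.I + 1) ≠ 0 := by
    refine mul_ne_zero ?_ ?_ <;> intro h <;> have := congrArg Complex.re h <;> simp at this <;>
      linarith
  have hcont : Continuous fun y : ℝ ↦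
      (1 : ℂ) / ((σ + y * Complex.I) * (σ + y * Complex.I + 1)) :=
    Continuous.div continuous_const (by fun_prop) hne
  refine Integrable.mono' ((integrable_one_add_abs_rpow_neg one_lt_two).const_mul 4)
    hcont.aestronglyMeasurable (.of_forall fun y ↦ ?_)
  simpa using norm_one_div_mul_add_one_le (s := σ + y * Complex.I) (by simpa using hσ)

lemma two_pi_mul_cesaroKernel {σ : ℝ} (hσ : 1 ≤ σ) {u : ℝ} (hu : 0 < u) :
    2 * π * cesaroKernel u = ∫ y : ℝ, (u : ℂ) ^ (-(σ + y * Complex.I)) *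
      (1 / ((σ + y * Complex.I) * (σ + y * Complex.I + 1))) := by
  have hmellin (y : ℝ) : mellin cesaroKernel (σ + y * Complex.I) =
      1 / ((σ + y * Complex.I) * (σ + y * Complex.I + 1)) :=
    (hasMellin_cesaroKernel (by simp; linarith)).2
  have hvert : Complex.VerticalIntegrable (mellin cesaroKernel) σ := by
    simp only [Complex.VerticalIntegrable, hmellin]
    exact verticalIntegrable_one_div_mul_add_one hσ
  have hinv := mellinInv_mellin_eq σ cesaroKernel hu
    (hasMellin_cesaroKernel (by simp; linarith)).1 hvert continuous_cesaroKernel.continuousAt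
  have hpi : (π : ℂ) ≠ 0 := by exact_mod_cast Real.pi_ne_zero
  rw [← hinv, mellinInv, Complex.real_smul, ← mul_assoc]
  simp only [hmellin, smul_eq_mul]
  rw [show (2 * π * (1 / (2 * π) : ℝ) : ℂ) = 1 by push_cast; field_simp, one_mul]

lemma natCast_div_cpow_neg {n : ℕ} {x : ℝ} (hx : 0 ≤ x) (s : ℂ) :
    ((n / x : ℝ) : ℂ) ^ (-s) = (x : ℂ) ^ s / (n : ℂ) ^ s := by
  have harg : (x : ℂ).arg ≠ π := by
    rw [Complex.arg_ofReal_of_nonneg hx]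
    exact Real.pi_pos.ne
  rw [Complex.ofReal_div, div_eq_mul_inv, ← Complex.ofReal_inv,
    Complex.mul_cpow_ofReal_nonneg n.cast_nonneg (inv_nonneg.mpr hx), Complex.ofReal_inv,
    Complex.inv_cpow _ _ harg, Complex.cpow_neg, Complex.cpow_neg, inv_inv,
    Complex.ofReal_natCast, mul_comm, div_eq_mul_inv]

lemma continuous_term_comp (f : ℕ → ℂ) (n : ℕ) {s : ℝ → ℂ} (hs : Continuous s) :
    Continuous fun y ↦ LSeries.term f (s y) n := by
  rcases eq_or_ne n 0 with rfl | hn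
  · simp [continuous_const]
  · have hn' : (n : ℂ) ≠ 0 := by exact_mod_cast hn
    simp only [LSeries.term_of_ne_zero hn]
    exact continuous_const.div (hs.const_cpow (Or.inl hn')) fun y ↦ by
      simp [Complex.cpow_eq_zero_iff, hn']

lemma ofReal_mul_cesaroKernel_div {x : ℝ} (hx : 0 < x) (t : ℝ) :
    x * cesaroKernel (t / x) = (max 0 (x - t) : ℝ) := by
  rw [cesaroKernel, ← Complex.ofReal_mul, mul_max_of_nonneg _ _ hx.le, mul_zero, mul_sub,
    mul_one, mul_div_cancel₀ t hx.ne']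

lemma hasSum_integral_term_mul {f : ℕ → ℂ} {σ : ℝ} (hf : LSeriesSummable f σ) {H : ℝ → ℂ}
    (hH : Integrable H) :
    HasSum (fun n ↦ ∫ y : ℝ, LSeries.term f (σ + y * Complex.I) n * H y)
      (∫ y : ℝ, LSeries f (σ + y * Complex.I) * H y) := by
  have hnorm (n : ℕ) (y : ℝ) : ‖LSeries.term f (σ + y * Complex.I) n * H y‖ =
      ‖LSeries.term f σ n‖ * ‖H y‖ := by
    simp [LSeries.norm_term_eq]
  have hinteg (n : ℕ) : Integrable fun y : ℝ ↦ LSeries.term f (σ + y * Complex.I) n * H y :=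
    (hH.norm.const_mul ‖LSeries.term f σ n‖).mono'
      ((continuous_term_comp f n (by fun_prop)).aestronglyMeasurable.mul hH.aestronglyMeasurable)
      (.of_forall fun y ↦ (hnorm n y).le)
  have hsum : Summable fun n ↦ ∫ y : ℝ, ‖LSeries.term f (σ + y * Complex.I) n * H y‖ := by
    simp only [hnorm, integral_const_mul]
    exact hf.norm.mul_right _
  simpa only [tsum_mul_right] using! hasSum_integral_of_summable_integral_norm hinteg hsum

lemma integrable_cpow_mul_one_div_mul_add_one {σ x : ℝ} (hσ : 1 ≤ σ) (hx : 0 < x) :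
    Integrable fun y : ℝ ↦ (x : ℂ) ^ (σ + y * Complex.I) *
      (1 / ((σ + y * Complex.I) * (σ + y * Complex.I + 1))) := by
  have hx' : (x : ℂ) ≠ 0 := by exact_mod_cast hx.ne'
  have hcont : Continuous fun y : ℝ ↦ (x : ℂ) ^ (σ + y * Complex.I) :=
    Continuous.const_cpow (by fun_prop) (Or.inl hx')
  refine (verticalIntegrable_one_div_mul_add_one hσ).bdd_mul (c := x ^ σ)
    hcont.aestronglyMeasurable (.of_forall fun y ↦ ?_)
  simp [Complex.norm_cpow_eq_rpow_re_of_pos hx]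

lemma ofReal_mul_integral_term_mul {f : ℕ → ℂ} {n : ℕ} (hn : n ≠ 0) {σ x : ℝ} (hσ : 1 ≤ σ)
    (hx : 0 < x) :
    ((x : ℂ) * ∫ y : ℝ, LSeries.term f (σ + y * Complex.I) n * ((x : ℂ) ^ (σ + y * Complex.I) *
        (1 / ((σ + y * Complex.I) * (σ + y * Complex.I + 1))))) =
      2 * π * (f n * (max 0 (x - n) : ℝ)) := by
  have hinv := two_pi_mul_cesaroKernel hσ (u := n / x) (by positivity)
  have hpull : (f n * ∫ y : ℝ, ((n / x : ℝ) : ℂ) ^ (-(σ + y * Complex.I)) *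
      (1 / ((σ + y * Complex.I) * (σ + y * Complex.I + 1)))) =
        ∫ y : ℝ, LSeries.term f (σ + y * Complex.I) n * ((x : ℂ) ^ (σ + y * Complex.I) *
          (1 / ((σ + y * Complex.I) * (σ + y * Complex.I + 1)))) := by
    rw [← integral_const_mul]
    simp only [LSeries.term_of_ne_zero hn, natCast_div_cpow_neg hx.le]
    exact integral_congr_ae (.of_forall fun y ↦ by ring)
  rw [← hpull, ← hinv, ← ofReal_mul_cesaroKernel_div hx]
  ring

lemma two_pi_mul_sum_mul_sub {f : ℕ → ℂ} {σ x : ℝ} (hσ : 1 ≤ σ) (hf : LSeriesSummable f σ)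
    (hx : 0 < x) :
    2 * π * ∑ n ∈ Finset.Icc 1 ⌊x⌋₊, f n * (x - n : ℝ) =
      x * ∫ y : ℝ, LSeries f (σ + y * Complex.I) * ((x : ℂ) ^ (σ + y * Complex.I) *
        (1 / ((σ + y * Complex.I) * (σ + y * Complex.I + 1)))) := by
  have hsum := (hasSum_integral_term_mul hf
    (integrable_cpow_mul_one_div_mul_add_one hσ hx)).mul_left (x : ℂ)
  rw [← hsum.tsum_eq, tsum_eq_sum (s := Finset.Icc 1 ⌊x⌋₊), Finset.mul_sum]
  · refine Finset.sum_congr rfl fun n hn ↦ ?_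
    rw [Finset.mem_Icc, Nat.le_floor_iff hx.le] at hn
    rw [ofReal_mul_integral_term_mul (by omega) hσ hx, max_eq_right (by linarith)]
  · intro n hn
    rcases eq_or_ne n 0 with rfl | hn0
    · simp
    · have hlt : x < n := (Nat.floor_lt hx.le).mp (by rw [Finset.mem_Icc] at hn; omega)
      rw [ofReal_mul_integral_term_mul hn0 hσ hx, max_eq_left (by linarith)]
      simp

lemma norm_sum_mul_sub_le {f : ℕ → ℂ} {σ x B : ℝ} (hσ : 1 ≤ σ) (hf : LSeriesSummable f σ)
    (hx : 0 < x) (hB : ∀ y : ℝ, ‖LSeries f (σ + y * Complex.I)‖ ≤ B * (1 + |y|) ^ (1 / 2 : ℝ)) :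
    ‖∑ n ∈ Finset.Icc 1 ⌊x⌋₊, f n * (x - n : ℝ)‖ ≤
      B * (4 * ∫ y : ℝ, (1 + |y|) ^ (-(3 / 2) : ℝ)) * x ^ (1 + σ) := by
  have hbound (y : ℝ) : ‖LSeries f (σ + y * Complex.I) * ((x : ℂ) ^ (σ + y * Complex.I) *
      (1 / ((σ + y * Complex.I) * (σ + y * Complex.I + 1))))‖ ≤
        4 * B * x ^ σ * (1 + |y|) ^ (-(3 / 2) : ℝ) := by
    have hkernel := norm_one_div_mul_add_one_le (s := σ + y * Complex.I) (by simpa using hσ)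
    have him : (σ + y * Complex.I : ℂ).im = y := by simp
    have hre : (σ + y * Complex.I : ℂ).re = σ := by simp
    rw [him] at hkernel
    have hB0 : 0 ≤ B * (1 + |y|) ^ (1 / 2 : ℝ) := (norm_nonneg _).trans (hB y)
    rw [norm_mul, norm_mul, Complex.norm_cpow_eq_rpow_re_of_pos hx, hre]
    calc _ ≤ B * (1 + |y|) ^ (1 / 2 : ℝ) * (x ^ σ * (4 * (1 + |y|) ^ (-2 : ℝ))) := by
          gcongr
          exact hB y
      _ = 4 * B * x ^ σ * ((1 + |y|) ^ (1 / 2 : ℝ) * (1 + |y|) ^ (-2 : ℝ)) := by ring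
      _ = _ := by rw [← Real.rpow_add (by positivity)]; norm_num
  have hintegral := norm_integral_le_of_norm_le
    ((integrable_one_add_abs_rpow_neg (r := 3 / 2) (by norm_num)).const_mul _)
    (.of_forall hbound)
  rw [integral_const_mul] at hintegral
  have htwo_pi : ‖(2 * π : ℂ)‖ = 2 * π := by simp [abs_of_pos Real.pi_pos]
  have hone : 1 ≤ 2 * π := by linarith [Real.pi_gt_three]
  calc ‖∑ n ∈ Finset.Icc 1 ⌊x⌋₊, f n * (x - n : ℝ)‖
      ≤ ‖2 * π * ∑ n ∈ Finset.Icc 1 ⌊x⌋₊, f n * (x - n : ℝ)‖ := by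
        rw [norm_mul, htwo_pi]
        exact le_mul_of_one_le_left (norm_nonneg _) hone
    _ ≤ x * (4 * B * x ^ σ * ∫ y : ℝ, (1 + |y|) ^ (-(3 / 2) : ℝ)) := by
        rw [two_pi_mul_sum_mul_sub hσ hf hx, norm_mul, Complex.norm_real, Real.norm_of_nonneg hx.le]
        gcongr
    _ = _ := by rw [Real.rpow_add hx, Real.rpow_one]; ring

/-- The coefficients `Λ n - 1` of the Dirichlet series `zetaDefect`, as complex numbers. -/
noncomputable def vonMangoldtSubOne (n : ℕ) : ℂ := (Λ n : ℂ) - 1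

lemma abscissaOfAbsConv_vonMangoldtSubOne_le :
    LSeries.abscissaOfAbsConv vonMangoldtSubOne ≤ 1 := by
  refine LSeries.abscissaOfAbsConv_le_of_forall_lt_LSeriesSummable (x := 1) fun y hy ↦ ?_
  exact (ArithmeticFunction.LSeriesSummable_vonMangoldt (s := y) (by simpa using hy)).sub
    (LSeriesSummable_one_iff.mpr (by simpa using hy))

lemma LSeries_vonMangoldtSubOne {s : ℂ} (hs : 1 < s.re) :
    LSeries vonMangoldtSubOne s = zetaDefect s := by
  have hs1 : s ≠ 1 := by rintro rfl; simp at hs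
  rw [zetaDefect_eq hs1 (riemannZeta_ne_zero_of_one_lt_re hs),
    ← ArithmeticFunction.LSeries_vonMangoldt_eq_deriv_riemannZeta_div hs,
    ← LSeries_one_eq_riemannZeta hs,
    ← LSeries_sub (ArithmeticFunction.LSeriesSummable_vonMangoldt hs)
      (LSeriesSummable_one_iff.mpr hs)]
  rfl

lemma LSeries_iterate_logMul_vonMangoldtSubOne {s : ℂ} (hs : 1 < s.re) (k : ℕ) :
    LSeries (LSeries.logMul^[k] vonMangoldtSubOne) s = (-1) ^ k * iteratedDeriv k zetaDefect s := by
  have hderiv := LSeries_iteratedDeriv (f := vonMangoldtSubOne) k (s := s)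
    (abscissaOfAbsConv_vonMangoldtSubOne_le.trans_lt (by exact_mod_cast hs))
  have heq : LSeries vonMangoldtSubOne =ᶠ[nhds s] zetaDefect := by
    filter_upwards [(isOpen_lt continuous_const Complex.continuous_re).mem_nhds hs] with z hz
    exact LSeries_vonMangoldtSubOne hz
  rw [← heq.iteratedDeriv_eq k, hderiv, ← mul_assoc, ← mul_pow]
  simp

lemma iterate_logMul_vonMangoldtSubOne (k n : ℕ) :
    LSeries.logMul^[k] vonMangoldtSubOne n = (((Λ n - 1) * log n ^ k : ℝ) : ℂ) := by
  induction k with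
  | zero => simp [vonMangoldtSubOne]
  | succ k ih =>
    rw [Function.iterate_succ_apply', LSeries.logMul, ih]
    push_cast
    rw [← Complex.natCast_log]
    ring

lemma exists_abs_sum_vonMangoldt_sub_one_mul_sub_le_rpow (k : ℕ) :
    ∃ C > 0, ∀ σ x : ℝ, 1 < σ → σ ≤ 3 / 2 → 0 < x →
      |∑ n ∈ Finset.Icc 1 ⌊x⌋₊, (Λ n - 1) * log n ^ k * (x - n)| ≤ C * x ^ (1 + σ) := by
  obtain ⟨B, hB, hbound⟩ := exists_norm_iteratedDeriv_zetaDefect_le k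
  have : 0 ≤ ∫ y : ℝ, (1 + |y|) ^ (-(3 / 2) : ℝ) := integral_nonneg fun y ↦ by positivity
  refine ⟨B * (4 * ∫ y : ℝ, (1 + |y|) ^ (-(3 / 2) : ℝ)) + 1, by positivity,
    fun σ x hσ hσ' hx ↦ ?_⟩
  have hsummable : LSeriesSummable (LSeries.logMul^[k] vonMangoldtSubOne) σ := by
    refine LSeriesSummable_of_abscissaOfAbsConv_lt_re ?_
    rw [LSeries.absicssaOfAbsConv_logPowMul]
    exact abscissaOfAbsConv_vonMangoldtSubOne_le.trans_lt
      (by rw [Complex.ofReal_re]; exact_mod_cast hσ)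
  have hline (y : ℝ) : ‖LSeries (LSeries.logMul^[k] vonMangoldtSubOne) (σ + y * Complex.I)‖ ≤
      B * (1 + |y|) ^ (1 / 2 : ℝ) := by
    rw [LSeries_iterate_logMul_vonMangoldtSubOne (by simpa using hσ)]
    simpa using hbound (σ + y * Complex.I) (by simpa using hσ.le) (by simpa using hσ')
  have hmain := norm_sum_mul_sub_le hσ.le hsummable hx hline
  simp only [iterate_logMul_vonMangoldtSubOne] at hmain
  rw [← Real.norm_eq_abs, ← Complex.norm_real]
  push_cast at hmain ⊢
  exact hmain.trans (by gcongr; linarith)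

lemma rpow_two_add_one_div_log {x : ℝ} (hx : 1 < x) :
    x ^ (1 + (1 + 1 / log x)) = x ^ 2 * exp 1 := by
  rw [← add_assoc, Real.rpow_add (by linarith), Real.rpow_def_of_pos (by linarith) (1 / log x),
    mul_one_div_cancel (Real.log_pos hx).ne', one_add_one_eq_two, Real.rpow_two]

lemma two_le_log_of_eight_le {x : ℝ} (hx : 8 ≤ x) : 2 ≤ log x := by
  rw [Real.le_log_iff_exp_le (by linarith), show (2 : ℝ) = 1 + 1 by norm_num, Real.exp_add]
  nlinarith [Real.exp_one_lt_d9, Real.exp_pos 1]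

theorem exists_abs_sum_vonMangoldt_sub_one_mul_sub_le (k : ℕ) : ∃ C > 0, ∀ x : ℝ, 8 ≤ x →
    |∑ n ∈ Finset.Icc 1 ⌊x⌋₊, (Λ n - 1) * log n ^ k * (x - n)| ≤ C * x ^ 2 := by
  obtain ⟨C, hC, hbound⟩ := exists_abs_sum_vonMangoldt_sub_one_mul_sub_le_rpow k
  refine ⟨C * exp 1, by positivity, fun x hx ↦ ?_⟩
  have hlog := two_le_log_of_eight_le hx
  have hinv : 1 / log x ≤ 1 / 2 := one_div_le_one_div_of_le two_pos hlog
  have hinv_pos : 0 < 1 / log x := by positivity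
  have hmain := hbound (1 + 1 / log x) x (by linarith) (by linarith) (by linarith)
  rw [rpow_two_add_one_div_log (by linarith)] at hmain
  exact hmain.trans (by linarith)

end SmoothedSums

/-! ### The prime number theorem with a logarithmic-power error term -/

section PrimeNumberTheorem

open scoped ArithmeticFunction.vonMangoldt

lemma abs_sum_Ioc_mul_sub_le {c f : ℕ → ℝ} {a b : ℕ} {B : ℝ}
    (hf : AntitoneOn f (Set.Ici (a + 1)))
    (hc : ∀ j, a ≤ j → j ≤ b → |∑ n ∈ Finset.Ioc a j, c n| ≤ B) {j : ℕ} (haj : a + 1 ≤ j)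
    (hjb : j ≤ b) :
    |∑ n ∈ Finset.Ioc a j, c n * f n - f j * ∑ n ∈ Finset.Ioc a j, c n| ≤
      B * (f (a + 1) - f j) := by
  induction j, haj using Nat.le_induction with
  | base => simp [mul_comm]
  | succ j haj ih =>
    have hmono : f (j + 1) ≤ f j := hf haj (Set.mem_Ici.mpr (by omega)) j.le_succ
    have hstep : |(f j - f (j + 1)) * ∑ n ∈ Finset.Ioc a j, c n| ≤ (f j - f (j + 1)) * B := by
      rw [abs_mul, abs_of_nonneg (by linarith)]
      exact mul_le_mul_of_nonneg_left (hc j (by omega) (by omega)) (by linarith)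
    rw [Finset.sum_Ioc_succ_top (by omega), Finset.sum_Ioc_succ_top (by omega)]
    calc _ = |(∑ n ∈ Finset.Ioc a j, c n * f n - f j * ∑ n ∈ Finset.Ioc a j, c n) +
          (f j - f (j + 1)) * ∑ n ∈ Finset.Ioc a j, c n| := by ring_nf
      _ ≤ B * (f (a + 1) - f j) + (f j - f (j + 1)) * B :=
          (abs_add_le _ _).trans (add_le_add (ih (by omega)) hstep)
      _ = B * (f (a + 1) - f (j + 1)) := by ring

lemma abs_sum_Ioc_mul_le {c f : ℕ → ℝ} {a b : ℕ} {B : ℝ} (hf₀ : ∀ n, a + 1 ≤ n → 0 ≤ f n)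
    (hf : AntitoneOn f (Set.Ici (a + 1))) (hab : a < b)
    (hc : ∀ j, a ≤ j → j ≤ b → |∑ n ∈ Finset.Ioc a j, c n| ≤ B) :
    |∑ n ∈ Finset.Ioc a b, c n * f n| ≤ B * f (a + 1) := by
  have hparts := abs_sum_Ioc_mul_sub_le hf hc hab le_rfl
  have hlast : |f b * ∑ n ∈ Finset.Ioc a b, c n| ≤ f b * B := by
    rw [abs_mul, abs_of_nonneg (hf₀ b hab)]
    exact mul_le_mul_of_nonneg_left (hc b hab.le le_rfl) (hf₀ b hab)
  calc _ = |(∑ n ∈ Finset.Ioc a b, c n * f n - f b * ∑ n ∈ Finset.Ioc a b, c n) +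
        f b * ∑ n ∈ Finset.Ioc a b, c n| := by ring_nf
    _ ≤ B * (f (a + 1) - f b) + f b * B := (abs_add_le _ _).trans (add_le_add hparts hlast)
    _ = B * f (a + 1) := by ring

lemma log_pow_le_factorial_mul (m : ℕ) {x : ℝ} (hx : 1 ≤ x) : log x ^ m ≤ m.factorial * x := by
  have h := Real.pow_div_factorial_le_exp (log x) (Real.log_nonneg hx) m
  rwa [Real.exp_log (by linarith), div_le_iff₀' (by positivity)] at h

lemma log_pow_le_factorial_mul_sqrt (m : ℕ) {x : ℝ} (hx : 1 ≤ x) :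
    log x ^ m ≤ 2 ^ m * m.factorial * √x := by
  have h := log_pow_le_factorial_mul m (x := √x) (Real.one_le_sqrt.mpr hx)
  rw [Real.log_sqrt (by linarith), div_pow, div_le_iff₀ (by positivity)] at h
  linarith

lemma one_le_log_of_three_le {x : ℝ} (hx : 3 ≤ x) : 1 ≤ log x := by
  rw [Real.le_log_iff_exp_le (by linarith)]
  linarith [Real.exp_one_lt_d9]

lemma abs_vonMangoldt_sub_one_le (n : ℕ) : |Λ n - 1| ≤ max (log n) 1 := by
  have hle : Λ n ≤ log n := ArithmeticFunction.vonMangoldt_le_log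
  have hnonneg : 0 ≤ Λ n := ArithmeticFunction.vonMangoldt_nonneg
  rw [abs_le]
  constructor <;> linarith [le_max_left (log n) 1, le_max_right (log n) 1]

lemma sum_Icc_add_mul_sub (w : ℕ → ℝ) (N H : ℕ) :
    ∑ n ∈ Finset.Icc 1 (N + H), w n * ((N + H : ℕ) - n) =
      ∑ n ∈ Finset.Icc 1 N, w n * (N - n) + H * ∑ n ∈ Finset.Icc 1 N, w n +
        ∑ n ∈ Finset.Ioc N (N + H), w n * ((N + H : ℕ) - n) := by
  have hsplit : ∑ n ∈ Finset.Icc 1 N, w n * ((N + H : ℕ) - n) +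
      ∑ n ∈ Finset.Ioc N (N + H), w n * ((N + H : ℕ) - n) =
        ∑ n ∈ Finset.Icc 1 (N + H), w n * ((N + H : ℕ) - n) :=
    Finset.sum_Ioc_consecutive _ N.zero_le (N.le_add_right H)
  rw [← hsplit, Finset.mul_sum, ← Finset.sum_add_distrib]
  congr 1
  exact Finset.sum_congr rfl fun n _ ↦ by push_cast; ring

/-- Differencing the smoothed sum over `H` steps recovers the unsmoothed one up to the terms of
`(N, N + H]`. -/
lemma abs_sum_Icc_le_of_abs_sum_mul_sub_le {w : ℕ → ℝ} {N H : ℕ} {A₁ A₂ B : ℝ} (hH : 0 < H)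
    (h₁ : |∑ n ∈ Finset.Icc 1 N, w n * (N - n)| ≤ A₁)
    (h₂ : |∑ n ∈ Finset.Icc 1 (N + H), w n * ((N + H : ℕ) - n)| ≤ A₂)
    (hB : ∀ n ∈ Finset.Ioc N (N + H), |w n| ≤ B) :
    |∑ n ∈ Finset.Icc 1 N, w n| ≤ (A₁ + A₂) / H + H * B := by
  have hH' : (0 : ℝ) < H := by exact_mod_cast hH
  have hsplit := sum_Icc_add_mul_sub w N H
  have htail : |∑ n ∈ Finset.Ioc N (N + H), w n * ((N + H : ℕ) - n)| ≤ H * (B * H) := by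
    have hterm (n : ℕ) (hn : n ∈ Finset.Ioc N (N + H)) : |w n * ((N + H : ℕ) - n)| ≤ B * H := by
      have hB0 : 0 ≤ B := (abs_nonneg _).trans (hB n hn)
      have hn' : (N : ℝ) < n ∧ (n : ℝ) ≤ (N + H : ℕ) := by exact_mod_cast Finset.mem_Ioc.mp hn
      rw [abs_mul, abs_of_nonneg (sub_nonneg.mpr hn'.2)]
      exact mul_le_mul (hB n hn) (by push_cast; linarith) (sub_nonneg.mpr hn'.2) hB0
    calc _ ≤ (Finset.Ioc N (N + H)).card • (B * H) :=
          (Finset.abs_sum_le_sum_abs _ _).trans (Finset.sum_le_card_nsmul _ _ _ hterm)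
      _ = H * (B * H) := by simp
  have hscaled : H * |∑ n ∈ Finset.Icc 1 N, w n| ≤ A₁ + A₂ + H * (B * H) := by
    rw [← abs_of_pos hH', ← abs_mul, abs_of_pos hH', abs_le]
    rw [abs_le] at h₁ h₂ htail
    constructor <;> linarith
  calc _ ≤ (A₁ + A₂ + H * (B * H)) / H := by rwa [le_div_iff₀' hH']
    _ = (A₁ + A₂) / H + H * B := by field_simp

/-- The step length `H ≍ N / (log N) ^ m` balances the two error terms of differencing. -/
lemma exists_nat_div_log_pow_le (m : ℕ) {N : ℕ} (hN : 3 ≤ N) : ∃ H : ℕ, 0 < H ∧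
    N / log N ^ m ≤ H ∧ (H : ℝ) ≤ (1 + m.factorial) * (N / log N ^ m) ∧ (H : ℝ) ≤ 2 * N := by
  have hN' : (3 : ℝ) ≤ N := by exact_mod_cast hN
  have hlog : 1 ≤ log N ^ m := one_le_pow₀ (one_le_log_of_three_le hN')
  have hfloor := Nat.floor_le (a := (N : ℝ) / log N ^ m) (by positivity)
  refine ⟨⌊(N : ℝ) / log N ^ m⌋₊ + 1, by positivity, ?_, ?_, ?_⟩ <;> push_cast
  · exact (Nat.lt_floor_add_one _).le
  · have : 1 ≤ m.factorial * ((N : ℝ) / log N ^ m) := by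
      rw [← mul_div_assoc, one_le_div (by positivity)]
      exact log_pow_le_factorial_mul m (by linarith)
    linarith
  · linarith [div_le_self (by linarith : (0 : ℝ) ≤ N) hlog]

lemma abs_vonMangoldt_sub_one_mul_log_pow_le (k : ℕ) {N n : ℕ} (hN : 3 ≤ N) (hNn : N ≤ n)
    (hn : n ≤ N * N) : |(Λ n - 1) * log n ^ k| ≤ (2 * log N) ^ (k + 1) := by
  have hN' : (3 : ℝ) ≤ N := by exact_mod_cast hN
  have hNn' : (N : ℝ) ≤ n := by exact_mod_cast hNn
  have hlog : log n ≤ 2 * log N := by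
    calc log n ≤ log (N * N) := Real.log_le_log (by linarith) (by exact_mod_cast hn)
      _ = 2 * log N := by rw [Real.log_mul (by positivity) (by positivity), two_mul]
  have hlog_one : 1 ≤ log n := one_le_log_of_three_le (by linarith)
  have hcoeff : |Λ n - 1| ≤ log n := by
    simpa [max_eq_left hlog_one] using abs_vonMangoldt_sub_one_le n
  rw [abs_mul, abs_pow, abs_of_nonneg (a := log n) (by linarith), pow_succ']
  exact mul_le_mul (hcoeff.trans hlog) (by gcongr) (by positivity) (by linarith)

lemma exists_abs_sum_vonMangoldt_sub_one_mul_log_pow_le (m : ℕ) : ∃ C > 0, ∀ N : ℕ, 8 ≤ N →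
    |∑ n ∈ Finset.Icc 1 N, (Λ n - 1) * log n ^ (2 * m)| ≤ C * N * log N ^ (m + 1) := by
  obtain ⟨C, hC, hsmooth⟩ := exists_abs_sum_vonMangoldt_sub_one_mul_sub_le (2 * m)
  refine ⟨10 * C + (1 + m.factorial) * 2 ^ (2 * m + 1), by positivity, fun N hN ↦ ?_⟩
  have hN' : (8 : ℝ) ≤ N := by exact_mod_cast hN
  obtain ⟨H, hH0, hH_lower, hH_upper, hHN⟩ := exists_nat_div_log_pow_le m (N := N) (by omega)
  have hH0' : (0 : ℝ) < H := by exact_mod_cast hH0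
  have hHN' : H ≤ 2 * N := by exact_mod_cast hHN
  have h₁ := hsmooth N hN'
  have h₂ := hsmooth ((N + H : ℕ) : ℝ) (by push_cast; linarith)
  rw [Nat.floor_natCast] at h₁ h₂
  have hdiff := abs_sum_Icc_le_of_abs_sum_mul_sub_le hH0 h₁ h₂ (B := (2 * log N) ^ (2 * m + 1))
    fun n hn ↦ by
      rw [Finset.mem_Ioc] at hn
      exact abs_vonMangoldt_sub_one_mul_log_pow_le _ (by omega) hn.1.le (by nlinarith)
  set L := log N
  have hL1 : 1 ≤ L := one_le_log_of_three_le (by linarith)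
  have hfirst : (C * N ^ 2 + C * ((N + H : ℕ) : ℝ) ^ 2) / H ≤ 10 * C * N * L ^ (m + 1) := by
    rw [div_le_iff₀ (by positivity)] at hH_lower ⊢
    push_cast
    calc C * (N : ℝ) ^ 2 + C * (N + H) ^ 2 ≤ C * (N : ℝ) ^ 2 + C * (N + 2 * N) ^ 2 := by gcongr
      _ = 10 * C * N * N := by ring
      _ ≤ 10 * C * N * (H * L ^ m) := by gcongr
      _ ≤ 10 * C * N * (H * L ^ (m + 1)) := by gcongr; omega
      _ = _ := by ring
  have hsecond : H * (2 * L) ^ (2 * m + 1) ≤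
      (1 + m.factorial) * 2 ^ (2 * m + 1) * N * L ^ (m + 1) := by
    calc _ ≤ (1 + m.factorial) * (N / L ^ m) * (2 * L) ^ (2 * m + 1) := by gcongr
      _ = _ := by
        rw [mul_pow, show 2 * m + 1 = m + (m + 1) by ring, pow_add L]
        field_simp
  linarith

lemma antitoneOn_log_pow_inv (k : ℕ) {a : ℕ} (ha : 1 ≤ a) :
    AntitoneOn (fun n : ℕ ↦ (log n ^ k)⁻¹) (Set.Ici (a + 1)) := by
  intro i hi j _ hij
  have hi' : (1 : ℝ) < i := by exact_mod_cast (show 1 < i from by simp at hi; omega)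
  have hlog := Real.log_pos hi'
  have hij' : (i : ℝ) ≤ j := by exact_mod_cast hij
  dsimp only
  gcongr

lemma exists_abs_sum_Ioc_vonMangoldt_sub_one_le (K : ℕ) : ∃ C > 0, ∀ a N : ℕ, 8 ≤ a → a < N →
    log N / 2 ≤ log (a + 1 : ℕ) →
      |∑ n ∈ Finset.Ioc a N, (Λ n - 1)| ≤ C * (N / log N ^ K) := by
  obtain ⟨C, hC, hweighted⟩ := exists_abs_sum_vonMangoldt_sub_one_mul_log_pow_le (K + 1)
  refine ⟨2 * C * 2 ^ (2 * (K + 1)), by positivity, fun a N ha haN hlog ↦ ?_⟩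
  set w : ℕ → ℝ := fun n ↦ (Λ n - 1) * log n ^ (2 * (K + 1))
  set L := log N
  have hL : 0 < L := Real.log_pos (by exact_mod_cast (by omega : 1 < N))
  have hprefix (j : ℕ) (haj : a ≤ j) (hjN : j ≤ N) :
      |∑ n ∈ Finset.Icc 1 j, w n| ≤ C * N * L ^ (K + 2) := by
    have hj : (0 : ℝ) < j := by exact_mod_cast (by omega : 0 < j)
    have hjN' : (j : ℝ) ≤ N := by exact_mod_cast hjN
    have hlog_j : log j ≤ L := Real.log_le_log hj hjN'
    refine (hweighted j (by omega)).trans ?_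
    gcongr
  have hblock (j : ℕ) (haj : a ≤ j) (hjN : j ≤ N) :
      |∑ n ∈ Finset.Ioc a j, w n| ≤ 2 * (C * N * L ^ (K + 2)) := by
    have hsplit : ∑ n ∈ Finset.Icc 1 a, w n + ∑ n ∈ Finset.Ioc a j, w n =
        ∑ n ∈ Finset.Icc 1 j, w n := Finset.sum_Ioc_consecutive w a.zero_le haj
    rw [← eq_sub_iff_add_eq'] at hsplit
    rw [hsplit, two_mul]
    exact (abs_sub _ _).trans (add_le_add (hprefix j haj hjN) (hprefix a le_rfl haN.le))
  have hunweight : ∑ n ∈ Finset.Ioc a N, (Λ n - 1) =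
      ∑ n ∈ Finset.Ioc a N, w n * (log n ^ (2 * (K + 1)))⁻¹ := by
    refine Finset.sum_congr rfl fun n hn ↦ (mul_inv_cancel_right₀ (pow_ne_zero _ ?_) _).symm
    have hn : 1 < n := by rw [Finset.mem_Ioc] at hn; omega
    exact (Real.log_pos (by exact_mod_cast hn)).ne'
  calc |∑ n ∈ Finset.Ioc a N, (Λ n - 1)|
      ≤ 2 * (C * N * L ^ (K + 2)) * (log (a + 1 : ℕ) ^ (2 * (K + 1)))⁻¹ := by
        rw [hunweight]
        exact abs_sum_Ioc_mul_le (fun n _ ↦ by positivity)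
          (antitoneOn_log_pow_inv _ (by omega)) haN hblock
    _ ≤ 2 * (C * N * L ^ (K + 2)) * ((L / 2) ^ (2 * (K + 1)))⁻¹ := by gcongr
    _ = 2 * C * 2 ^ (2 * (K + 1)) * (N / L ^ K) := by
        rw [show 2 * (K + 1) = K + (K + 2) by ring, div_pow, pow_add L]
        field_simp
        ring

lemma abs_sum_Ioc_zero_vonMangoldt_sub_one_le {a N : ℕ} (haN : a ≤ N) (hN : 3 ≤ N) :
    |∑ n ∈ Finset.Ioc 0 a, (Λ n - 1)| ≤ a * log N := by
  have hterm (n : ℕ) (hn : n ∈ Finset.Ioc 0 a) : |Λ n - 1| ≤ log N := by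
    rw [Finset.mem_Ioc] at hn
    refine (abs_vonMangoldt_sub_one_le n).trans (max_le ?_ ?_)
    · exact Real.log_le_log (by exact_mod_cast hn.1) (by exact_mod_cast hn.2.trans haN)
    · exact one_le_log_of_three_le (by exact_mod_cast hN)
  simpa using (Finset.abs_sum_le_sum_abs _ _).trans (Finset.sum_le_card_nsmul _ _ _ hterm)

lemma sqrt_mul_log_le (K : ℕ) {x : ℝ} (hx : 1 < x) :
    √x * log x ≤ 2 ^ (K + 1) * (K + 1).factorial * (x / log x ^ K) := by
  have hlog := Real.log_pos hx
  rw [← mul_div_assoc, le_div_iff₀ (by positivity)]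
  calc √x * log x * log x ^ K = √x * log x ^ (K + 1) := by ring
    _ ≤ √x * (2 ^ (K + 1) * (K + 1).factorial * √x) := by
        gcongr
        exact log_pow_le_factorial_mul_sqrt (K + 1) hx.le
    _ = 2 ^ (K + 1) * (K + 1).factorial * (√x * √x) := by ring
    _ = _ := by rw [Real.mul_self_sqrt (by linarith)]

lemma exists_abs_psi_sub_le (K : ℕ) : ∃ C > 0, ∀ N : ℕ, 100 ≤ N →
    |Chebyshev.psi N - N| ≤ C * (N / log N ^ K) := by
  obtain ⟨C, hC, hblock⟩ := exists_abs_sum_Ioc_vonMangoldt_sub_one_le K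
  refine ⟨2 ^ (K + 1) * (K + 1).factorial + C, by positivity, fun N hN ↦ ?_⟩
  have hN' : (100 : ℝ) ≤ N := by exact_mod_cast hN
  have hsqrt : 10 ≤ √(N : ℝ) := Real.le_sqrt_of_sq_le (by linarith)
  set a := ⌊√(N : ℝ)⌋₊
  have ha_le : (a : ℝ) ≤ √N := Nat.floor_le (by positivity)
  have ha_ge : 8 ≤ a := Nat.le_floor (by push_cast; linarith)
  have haN : a < N := by
    have : (a : ℝ) < N := by nlinarith [Real.mul_self_sqrt (show (0 : ℝ) ≤ N by linarith)]
    exact_mod_cast this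
  have hlog_a : log N / 2 ≤ log (a + 1 : ℕ) := by
    rw [← Real.log_sqrt (by linarith)]
    exact Real.log_le_log (by linarith) (by push_cast; exact (Nat.lt_floor_add_one _).le)
  have hpsi : Chebyshev.psi N - N =
      ∑ n ∈ Finset.Ioc 0 a, (Λ n - 1) + ∑ n ∈ Finset.Ioc a N, (Λ n - 1) := by
    rw [Finset.sum_Ioc_consecutive _ a.zero_le haN.le, Finset.sum_sub_distrib]
    simp [Chebyshev.psi]
  have hinitial : |∑ n ∈ Finset.Ioc 0 a, (Λ n - 1)| ≤
      2 ^ (K + 1) * (K + 1).factorial * (N / log N ^ K) :=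
    calc _ ≤ a * log N := abs_sum_Ioc_zero_vonMangoldt_sub_one_le haN.le (by omega)
      _ ≤ √N * log N := by gcongr
      _ ≤ _ := sqrt_mul_log_le K (by linarith)
  rw [hpsi, add_mul]
  exact (abs_add_le _ _).trans (add_le_add hinitial (hblock a N ha_ge haN hlog_a))

theorem exists_abs_theta_sub_le (K : ℕ) : ∃ C > 0, ∀ N : ℕ, 100 ≤ N →
    |Chebyshev.theta N - N| ≤ C * (N / log N ^ K) := by
  obtain ⟨C, hC, hpsi⟩ := exists_abs_psi_sub_le K
  refine ⟨2 * (2 ^ (K + 1) * (K + 1).factorial) + C, by positivity, fun N hN ↦ ?_⟩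
  have hN' : (100 : ℝ) ≤ N := by exact_mod_cast hN
  have htheta := Chebyshev.abs_psi_sub_theta_le_sqrt_mul_log (x := (N : ℝ)) (by linarith)
  have hsqrt := sqrt_mul_log_le K (x := (N : ℝ)) (by linarith)
  calc |Chebyshev.theta N - N|
      ≤ |Chebyshev.theta N - Chebyshev.psi N| + |Chebyshev.psi N - N| := abs_sub_le _ _ _
    _ ≤ 2 * (2 ^ (K + 1) * (K + 1).factorial * (N / log N ^ K)) + C * (N / log N ^ K) := by
        rw [abs_sub_comm]
        gcongr
        · linarith
        · exact hpsi N hN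
    _ = _ := by ring

end PrimeNumberTheorem

/-! ### Counting integers by their largest prime factor -/

section LargestPrimeFactorCount

lemma getElem_le_iff_lt_countP {α : Type*} [LinearOrder α] (y : α) {l : List α}
    (hl : l.Pairwise (· ≤ ·)) {k : ℕ} (hk : k < l.length) :
    l[k] ≤ y ↔ k < l.countP (fun a ↦ decide (a ≤ y)) := by
  induction l generalizing k with
  | nil => simp at hk
  | cons a t ih =>
    obtain ⟨ha, ht⟩ := List.pairwise_cons.mp hl
    by_cases hay : a ≤ y
    · cases k with
      | zero => simp [hay]
      | succ k => simpa [hay] using ih ht (by simpa using hk)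
    · have hcount : (a :: t).countP (fun b ↦ decide (b ≤ y)) = 0 := by
        refine List.countP_eq_zero.mpr fun b hb ↦ ?_
        rcases List.mem_cons.mp hb with rfl | hb
        · simpa using hay
        · simpa using (not_le.mp hay).trans_le (ha b hb)
      have hmem := (List.getElem_mem hk : (a :: t)[k] ∈ a :: t)
      rw [hcount, iff_false_right k.not_lt_zero]
      rcases List.mem_cons.mp hmem with h | h
      · rwa [h]
      · exact fun hle ↦ hay ((ha _ h).trans hle)

/-- The number of `n ∈ [1, N]` all of whose prime factors are at most `y` (`Ψ(N, y)` in the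
literature on smooth numbers). -/
noncomputable def smoothCount (N y : ℕ) : ℕ :=
  ((Finset.Icc 1 N).filter (fun n ↦ largestPrimeFactor n ≤ y)).card

lemma medianLPF_le_iff {x : ℝ} (hx : 1 ≤ ⌊x⌋₊) (y : ℕ) :
    medianLPF x ≤ y ↔ (⌊x⌋₊ + 1) / 2 ≤ smoothCount ⌊x⌋₊ y := by
  set s := (Finset.Icc 1 ⌊x⌋₊).val.map largestPrimeFactor with hs
  have hk : (⌊x⌋₊ + 1) / 2 - 1 < (s.sort (· ≤ ·)).length := by
    rw [Multiset.length_sort, hs, Multiset.card_map, Finset.card_val, Nat.card_Icc]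
    omega
  have hcount : (s.sort (· ≤ ·)).countP (fun a ↦ decide (a ≤ y)) = smoothCount ⌊x⌋₊ y := by
    rw [← Multiset.coe_countP, Multiset.sort_eq, hs, Multiset.countP_map]
    rfl
  rw [medianLPF, ← hs, List.getD_eq_getElem _ _ hk,
    getElem_le_iff_lt_countP y (Multiset.pairwise_sort s _) hk, hcount]
  omega

lemma lt_largestPrimeFactor_iff {n y : ℕ} (hn : 1 ≤ n) (hy : 1 ≤ y) :
    y < largestPrimeFactor n ↔ ∃ p, p.Prime ∧ y < p ∧ p ∣ n := by
  rcases hn.eq_or_lt with rfl | hn'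
  · have hnone : ¬∃ p, p.Prime ∧ y < p ∧ p ∣ 1 := fun ⟨p, hp, _, hd⟩ ↦
      hp.one_lt.ne' (Nat.dvd_one.mp hd)
    exact iff_of_false (by simp [largestPrimeFactor, Nat.one_le_iff_ne_zero.mp hy]) hnone
  · simp only [largestPrimeFactor, if_neg hn'.not_ge, Finset.lt_sup_iff, Nat.mem_primeFactors, id]
    exact exists_congr fun p ↦ ⟨fun ⟨⟨hp, hd, _⟩, hyp⟩ ↦ ⟨hp, hyp, hd⟩,
      fun ⟨hp, hyp, hd⟩ ↦ ⟨⟨hp, hd, by omega⟩, hyp⟩⟩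

/-- The number of pairs of a prime `p > y` and a multiple of `p` in `[1, N]`. -/
noncomputable def largePrimeMultipleCount (N y : ℕ) : ℕ :=
  ∑ p ∈ (Finset.Ioc y N).filter Nat.Prime, N / p

lemma filter_lt_largestPrimeFactor_eq_biUnion {N y : ℕ} (hy : 1 ≤ y) :
    (Finset.Icc 1 N).filter (fun n ↦ ¬largestPrimeFactor n ≤ y) =
      ((Finset.Ioc y N).filter Nat.Prime).biUnion
        fun p ↦ (Finset.Ioc 0 N).filter (fun n ↦ p ∣ n) := by
  ext n
  simp only [Finset.mem_filter, Finset.mem_Icc, Finset.mem_biUnion, Finset.mem_Ioc, not_le]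
  constructor
  · rintro ⟨⟨hn, hnN⟩, hlt⟩
    obtain ⟨p, hp, hyp, hd⟩ := (lt_largestPrimeFactor_iff hn hy).mp hlt
    exact ⟨p, ⟨⟨hyp, (Nat.le_of_dvd hn hd).trans hnN⟩, hp⟩, ⟨hn, hnN⟩, hd⟩
  · rintro ⟨p, ⟨⟨hyp, _⟩, hp⟩, ⟨hn, hnN⟩, hd⟩
    exact ⟨⟨hn, hnN⟩, (lt_largestPrimeFactor_iff hn hy).mpr ⟨p, hp, hyp, hd⟩⟩

/-- Below `(y + 1) ^ 2` an integer has at most one prime factor exceeding `y`, so nothing is counted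
twice. -/
lemma smoothCount_add_largePrimeMultipleCount {N y : ℕ} (hy : 1 ≤ y) (hN : N < (y + 1) ^ 2) :
    smoothCount N y + largePrimeMultipleCount N y = N := by
  have hdisj : (((Finset.Ioc y N).filter Nat.Prime : Finset ℕ) : Set ℕ).PairwiseDisjoint
      fun p ↦ (Finset.Ioc 0 N).filter (fun n ↦ p ∣ n) := by
    intro p hp q hq hpq
    rw [Finset.mem_coe, Finset.mem_filter, Finset.mem_Ioc] at hp hq
    rw [Function.onFun, Finset.disjoint_left]
    intro n hn hn'
    rw [Finset.mem_filter, Finset.mem_Ioc] at hn hn'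
    have hpqn : p * q ≤ n := Nat.le_of_dvd hn.1.1
      (((Nat.coprime_primes hp.2 hq.2).mpr hpq).mul_dvd_of_dvd_of_dvd hn.2 hn'.2)
    have hypq : (y + 1) * (y + 1) ≤ p * q := Nat.mul_le_mul hp.1.1 hq.1.1
    linarith [hn.1.2]
  have hlarge : ((Finset.Icc 1 N).filter (fun n ↦ ¬largestPrimeFactor n ≤ y)).card =
      largePrimeMultipleCount N y := by
    rw [filter_lt_largestPrimeFactor_eq_biUnion hy, Finset.card_biUnion hdisj,
      largePrimeMultipleCount]
    exact Finset.sum_congr rfl fun p _ ↦ Nat.Ioc_filter_dvd_card_eq_div N p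
  rw [← hlarge, smoothCount, Finset.card_filter_add_card_filter_not, Nat.card_Icc,
    Nat.add_sub_cancel]

lemma largePrimeMultipleCount_le_succ_add_div (N y : ℕ) :
    largePrimeMultipleCount N y ≤ largePrimeMultipleCount N (y + 1) + N / (y + 1) := by
  have hsubset : (Finset.Ioc y N).filter Nat.Prime ⊆
      insert (y + 1) ((Finset.Ioc (y + 1) N).filter Nat.Prime) := by
    intro p hp
    simp only [Finset.mem_filter, Finset.mem_Ioc, Finset.mem_insert] at hp ⊢
    by_cases h : p = y + 1
    · exact Or.inl h
    · exact Or.inr ⟨⟨by omega, hp.1.2⟩, hp.2⟩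
  refine (Finset.sum_le_sum_of_subset hsubset).trans_eq ?_
  rw [Finset.sum_insert (by simp), add_comm]
  rfl

end LargestPrimeFactorCount

/-! ### From primes to an integral -/

section PrimesToIntegral

/-- The summand of `ϑ(N) - N`, where `ϑ` is the Chebyshev function. -/
noncomputable def primeLogSubOne (n : ℕ) : ℝ := (if n.Prime then log n else 0) - 1

lemma sum_Ioc_primeLogSubOne {a b : ℕ} (hab : a ≤ b) : ∑ n ∈ Finset.Ioc a b, primeLogSubOne n =
    (Chebyshev.theta b - b) - (Chebyshev.theta a - a) := by
  have hprefix (j : ℕ) : Chebyshev.theta j - j = ∑ n ∈ Finset.Ioc 0 j, primeLogSubOne n := by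
    simp [primeLogSubOne, Finset.sum_sub_distrib, Chebyshev.theta, Finset.sum_filter]
  rw [hprefix, hprefix, ← Finset.sum_Ioc_consecutive _ a.zero_le hab, add_sub_cancel_left]

lemma sum_Ioc_natDiv_mul (f : ℕ → ℝ) (y N : ℕ) :
    ∑ n ∈ Finset.Ioc y N, ((N / n : ℕ) : ℝ) * f n =
      ∑ m ∈ Finset.Icc 1 N, ∑ n ∈ Finset.Ioc y (N / m), f n := by
  have hconst (n : ℕ) : ((N / n : ℕ) : ℝ) * f n = ∑ _m ∈ Finset.Icc 1 (N / n), f n := by simp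
  simp only [hconst]
  refine Finset.sum_comm' fun n m ↦ ?_
  simp only [Finset.mem_Ioc, Finset.mem_Icc]
  constructor
  · rintro ⟨⟨hyn, _⟩, hm, hmn⟩
    rw [Nat.le_div_iff_mul_le (by omega)] at hmn
    rw [Nat.le_div_iff_mul_le (by omega)]
    exact ⟨⟨hyn, by linarith⟩, hm, by nlinarith⟩
  · rintro ⟨⟨hyn, hnm⟩, hm, _⟩
    rw [Nat.le_div_iff_mul_le (by omega)] at hnm
    rw [Nat.le_div_iff_mul_le (by omega)]
    exact ⟨⟨hyn, by nlinarith⟩, hm, by linarith⟩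

lemma exists_abs_sum_Ioc_primeLogSubOne_mul_log_inv_le (K : ℕ) : ∃ C > 0, ∀ y J : ℕ, 100 ≤ y →
    |∑ n ∈ Finset.Ioc y J, primeLogSubOne n * (log n)⁻¹| ≤ C * (J / log y ^ K) := by
  obtain ⟨C, hC, htheta⟩ := exists_abs_theta_sub_le K
  refine ⟨2 * C, by positivity, fun y J hy ↦ ?_⟩
  have hy' : (100 : ℝ) ≤ y := by exact_mod_cast hy
  have hlog_y : 1 ≤ log y := one_le_log_of_three_le (by linarith)
  rcases le_or_gt J y with hJy | hyJ
  · rw [Finset.Ioc_eq_empty hJy.not_gt, Finset.sum_empty, abs_zero]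
    positivity
  have hprefix (j : ℕ) (hyj : y ≤ j) (hjJ : j ≤ J) :
      |Chebyshev.theta j - j| ≤ C * (J / log y ^ K) := by
    have hyj' : (y : ℝ) ≤ j := by exact_mod_cast hyj
    have hlog : log y ≤ log j := Real.log_le_log (by linarith) hyj'
    refine (htheta j (by omega)).trans ?_
    gcongr
  have hblock (j : ℕ) (hyj : y ≤ j) (hjJ : j ≤ J) :
      |∑ n ∈ Finset.Ioc y j, primeLogSubOne n| ≤ 2 * C * (J / log y ^ K) := by
    rw [sum_Ioc_primeLogSubOne hyj]
    linarith [abs_sub (Chebyshev.theta j - j) (Chebyshev.theta y - y), hprefix j hyj hjJ,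
      hprefix y le_rfl hyJ.le]
  have hanti : AntitoneOn (fun n : ℕ ↦ (log n)⁻¹) (Set.Ici (y + 1)) := by
    simpa using antitoneOn_log_pow_inv 1 (a := y) (by omega)
  refine (abs_sum_Ioc_mul_le (fun n _ ↦ by positivity) hanti hyJ hblock).trans ?_
  have hinv : (log (y + 1 : ℕ))⁻¹ ≤ 1 :=
    inv_le_one_of_one_le₀ (one_le_log_of_three_le (by push_cast; linarith))
  exact mul_le_of_le_one_right (by positivity) hinv

lemma exists_abs_largePrimeMultipleCount_sub_sum_le (K : ℕ) : ∃ C > 0, ∀ N y : ℕ, 100 ≤ y →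
    |(largePrimeMultipleCount N y : ℝ) - ∑ n ∈ Finset.Ioc y N, ((N / n : ℕ) : ℝ) / log n| ≤
      C * N * (1 + log N) / log y ^ K := by
  obtain ⟨C, hC, hinner⟩ := exists_abs_sum_Ioc_primeLogSubOne_mul_log_inv_le K
  refine ⟨C, hC, fun N y hy ↦ ?_⟩
  have hdiff : (largePrimeMultipleCount N y : ℝ) - ∑ n ∈ Finset.Ioc y N, ((N / n : ℕ) : ℝ) / log n =
      ∑ n ∈ Finset.Ioc y N, ((N / n : ℕ) : ℝ) * (primeLogSubOne n * (log n)⁻¹) := by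
    rw [largePrimeMultipleCount, Finset.sum_filter]
    push_cast
    rw [← Finset.sum_sub_distrib]
    refine Finset.sum_congr rfl fun n hn ↦ ?_
    have hn' : 1 < n := by rw [Finset.mem_Ioc] at hn; omega
    have hlog : log n ≠ 0 := (Real.log_pos (by exact_mod_cast hn')).ne'
    unfold primeLogSubOne
    split_ifs
    · field_simp
    · field_simp
      ring
  have hterm (m : ℕ) (_ : m ∈ Finset.Icc 1 N) :
      |∑ n ∈ Finset.Ioc y (N / m), primeLogSubOne n * (log n)⁻¹| ≤
        C * N / log y ^ K * (m : ℝ)⁻¹ := by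
    calc _ ≤ C * ((N / m : ℕ) / log y ^ K) := hinner y (N / m) hy
      _ ≤ C * ((N / m : ℝ) / log y ^ K) := by
          gcongr
          exact Nat.cast_div_le
      _ = _ := by ring
  have hharmonic := harmonic_le_one_add_log N
  rw [harmonic_eq_sum_Icc] at hharmonic
  push_cast at hharmonic
  rw [hdiff, sum_Ioc_natDiv_mul]
  calc _ ≤ ∑ m ∈ Finset.Icc 1 N, C * N / log y ^ K * (m : ℝ)⁻¹ :=
        (Finset.abs_sum_le_sum_abs _ _).trans (Finset.sum_le_sum hterm)
    _ ≤ C * N / log y ^ K * (1 + log N) := by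
        rw [← Finset.mul_sum]
        gcongr
    _ = _ := by ring

lemma antitoneOn_floor_div_div_log {x a : ℝ} (hx : 0 ≤ x) (ha : 1 < a) :
    AntitoneOn (fun t : ℝ ↦ (⌊x / t⌋₊ : ℝ) / log t) (Set.Ici a) := by
  intro s hs t _ hst
  have hs1 : 1 < s := ha.trans_le hs
  have hlog := Real.log_pos hs1
  have hfloor : (⌊x / t⌋₊ : ℝ) ≤ ⌊x / s⌋₊ := by
    exact_mod_cast Nat.floor_le_floor (by gcongr)
  dsimp only
  gcongr

lemma abs_sum_Ioc_sub_integral_le {F : ℝ → ℝ} {a b : ℕ} (hab : a ≤ b)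
    (hF : AntitoneOn F (Set.Icc a b)) :
    |∑ n ∈ Finset.Ioc a b, F n - ∫ t in (a : ℝ)..b, F t| ≤ F a - F b := by
  have hlower := AntitoneOn.sum_le_integral_Ico hab hF
  have hupper := AntitoneOn.integral_le_sum_Ico hab hF
  have hIoc : Finset.Ico (a + 1) (b + 1) = Finset.Ioc a b := by
    ext n
    simp only [Finset.mem_Ico, Finset.mem_Ioc]
    omega
  have hshift : ∑ i ∈ Finset.Ico a b, F (i + 1 : ℕ) = ∑ n ∈ Finset.Ioc a b, F n := by
    rw [Finset.sum_Ico_add' (fun n : ℕ ↦ F n) a b 1, hIoc]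
  have hends : ∑ n ∈ Finset.Ico a b, F n + F b = F a + ∑ n ∈ Finset.Ioc a b, F n := by
    rw [← Finset.sum_Ico_succ_top hab (fun n : ℕ ↦ F n), Finset.sum_eq_sum_Ico_succ_bot (by omega),
      hIoc]
  rw [abs_le]
  constructor <;> linarith

lemma abs_integral_floor_div_div_log_le_one {x : ℝ} (hx : 3 ≤ ⌊x⌋₊) :
    |∫ t in (⌊x⌋₊ : ℝ)..x, (⌊x / t⌋₊ : ℝ) / log t| ≤ 1 := by
  have hN : (3 : ℝ) ≤ ⌊x⌋₊ := by exact_mod_cast hx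
  have hNx : (⌊x⌋₊ : ℝ) ≤ x := Nat.floor_le (zero_le_one.trans (Nat.floor_pos.mp (by omega)))
  have hxN := Nat.lt_floor_add_one x
  have hbound (t : ℝ) (ht : t ∈ Set.uIoc (⌊x⌋₊ : ℝ) x) : ‖(⌊x / t⌋₊ : ℝ) / log t‖ ≤ 1 := by
    rw [Set.uIoc_of_le hNx] at ht
    have hlog : 1 ≤ log t := one_le_log_of_three_le (by linarith [ht.1])
    have hfloor : ⌊x / t⌋₊ ≤ 1 := by
      refine Nat.lt_succ_iff.mp ((Nat.floor_lt' two_ne_zero).mpr ?_)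
      rw [div_lt_iff₀ (by linarith [ht.1])]
      push_cast
      linarith [ht.1]
    rw [Real.norm_of_nonneg (by positivity), div_le_one (by positivity)]
    exact (by exact_mod_cast hfloor : (⌊x / t⌋₊ : ℝ) ≤ 1).trans hlog
  have hnorm := intervalIntegral.norm_integral_le_of_norm_le_const hbound
  rw [Real.norm_eq_abs, abs_of_nonneg (sub_nonneg.mpr hNx)] at hnorm
  linarith

lemma abs_sum_natDiv_div_log_sub_integral_le {x : ℝ} {y : ℕ} (hy : 3 ≤ y) (hyx : (y : ℝ) ≤ x) :
    |∑ n ∈ Finset.Ioc y ⌊x⌋₊, ((⌊x⌋₊ / n : ℕ) : ℝ) / log n -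
      ∫ t in (y : ℝ)..x, (⌊x / t⌋₊ : ℝ) / log t| ≤ x / y + 1 := by
  have hy' : (3 : ℝ) ≤ y := by exact_mod_cast hy
  have hyN : y ≤ ⌊x⌋₊ := Nat.le_floor hyx
  have hyN' : (y : ℝ) ≤ ⌊x⌋₊ := by exact_mod_cast hyN
  have hx : 0 ≤ x := by linarith
  have hNx : (⌊x⌋₊ : ℝ) ≤ x := Nat.floor_le hx
  set F : ℝ → ℝ := fun t ↦ (⌊x / t⌋₊ : ℝ) / log t with hF
  have hanti : AntitoneOn F (Set.Ici (y : ℝ)) :=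
    antitoneOn_floor_div_div_log hx (by linarith)
  have hinteg {a b : ℝ} (ha : (y : ℝ) ≤ a) (hab : a ≤ b) : IntervalIntegrable F volume a b :=
    (hanti.mono (by rw [Set.uIcc_of_le hab]; exact fun t ht ↦ ha.trans ht.1)).intervalIntegrable
  have hsum := abs_sum_Ioc_sub_integral_le hyN (hanti.mono Set.Icc_subset_Ici_self)
  have htail := abs_integral_floor_div_div_log_le_one (x := x) (by omega)
  have hlast : 0 ≤ F ⌊x⌋₊ := by positivity
  have hfirst : F y ≤ x / y :=
    (div_le_self (by positivity) (one_le_log_of_three_le hy')).trans (Nat.floor_le (by positivity))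
  have hterm (n : ℕ) : ((⌊x⌋₊ / n : ℕ) : ℝ) / log n = F n := by
    simp only [hF, Nat.floor_div_natCast]
  simp only [hterm]
  rw [← intervalIntegral.integral_add_adjacent_intervals (hinteg le_rfl hyN') (hinteg hyN' hNx),
    ← sub_sub]
  exact (abs_sub _ _).trans (by linarith)

end PrimesToIntegral

/-! ### Expansion of the integral -/

section IntegralExpansion

/-- The integrand `{1/s} (-log s)^j` of the coefficients of the asymptotic expansion. -/
noncomputable def fractInvMulLogPow (j : ℕ) (s : ℝ) : ℝ := Int.fract (1 / s) * (-log s) ^ j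

/-- The coefficients `∫₀¹ {1/s} (-log s)^j ds` of the asymptotic expansion of
`x⁻¹ ∫ ⌊x/t⌋ / log t dt` in powers of `1 / log x`. -/
noncomputable def fractInvLogMoment (j : ℕ) : ℝ := ∫ s in (0 : ℝ)..1, fractInvMulLogPow j s

lemma neg_log_pow_le (j : ℕ) {s : ℝ} (hs0 : 0 < s) (hs1 : s ≤ 1) :
    (-log s) ^ j ≤ 2 ^ j * j.factorial * s ^ (-(1 / 2) : ℝ) := by
  have h := log_pow_le_factorial_mul_sqrt j ((one_le_inv₀ hs0).mpr hs1)
  rwa [Real.log_inv, Real.sqrt_inv, Real.sqrt_eq_rpow, ← Real.rpow_neg hs0.le] at h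

lemma norm_fractInvMulLogPow_le (j : ℕ) {s : ℝ} (hs0 : 0 < s) (hs1 : s ≤ 1) :
    ‖fractInvMulLogPow j s‖ ≤ 2 ^ j * j.factorial * s ^ (-(1 / 2) : ℝ) := by
  have hlog : 0 ≤ (-log s) ^ j := pow_nonneg (neg_nonneg.mpr (Real.log_nonpos hs0.le hs1)) j
  rw [fractInvMulLogPow, Real.norm_of_nonneg (mul_nonneg (Int.fract_nonneg _) hlog)]
  exact (mul_le_of_le_one_left hlog (Int.fract_lt_one _).le).trans (neg_log_pow_le j hs0 hs1)

lemma intervalIntegrable_rpow_neg_half (a b : ℝ) :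
    IntervalIntegrable (fun s : ℝ ↦ s ^ (-(1 / 2) : ℝ)) volume a b :=
  intervalIntegral.intervalIntegrable_rpow' (by norm_num)

lemma intervalIntegrable_fractInvMulLogPow (j : ℕ) {a b : ℝ} (ha : 0 ≤ a) (hab : a ≤ b)
    (hb : b ≤ 1) : IntervalIntegrable (fractInvMulLogPow j) volume a b := by
  have hmeas : Measurable (fractInvMulLogPow j) := by
    unfold fractInvMulLogPow
    fun_prop
  refine ((intervalIntegrable_rpow_neg_half a b).const_mul (2 ^ j * j.factorial)).mono_fun'
    hmeas.aestronglyMeasurable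
    ((ae_restrict_iff' measurableSet_uIoc).mpr (Eventually.of_forall fun s hs ↦ ?_))
  rw [Set.uIoc_of_le hab] at hs
  exact norm_fractInvMulLogPow_le j (ha.trans_lt hs.1) (hs.2.trans hb)

lemma abs_integral_le_of_norm_le_rpow_neg_half {g : ℝ → ℝ} {D a b : ℝ} (hD : 0 ≤ D) (hab : a ≤ b)
    (hg : ∀ s, a < s → s ≤ b → ‖g s‖ ≤ D * s ^ (-(1 / 2) : ℝ)) :
    |∫ s in a..b, g s| ≤ 2 * D * √b := by
  have hnorm : ‖∫ s in a..b, g s‖ ≤ ∫ s in a..b, D * s ^ (-(1 / 2) : ℝ) :=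
    intervalIntegral.norm_integral_le_of_norm_le hab
      (Eventually.of_forall fun s hs ↦ hg s hs.1 hs.2)
      ((intervalIntegrable_rpow_neg_half a b).const_mul D)
  have hinteg : ∫ s in a..b, D * s ^ (-(1 / 2) : ℝ) = 2 * D * (√b - √a) := by
    rw [intervalIntegral.integral_const_mul, integral_rpow (Or.inl (by norm_num)),
      Real.sqrt_eq_rpow, Real.sqrt_eq_rpow]
    norm_num
    ring
  rw [hinteg, Real.norm_eq_abs] at hnorm
  exact hnorm.trans (by gcongr; linarith [Real.sqrt_nonneg a])

lemma abs_integral_fractInvMulLogPow_sub_moment_le (j : ℕ) {δ : ℝ} (hδ0 : 0 ≤ δ) (hδ1 : δ ≤ 1) :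
    |(∫ s in δ..1, fractInvMulLogPow j s) - fractInvLogMoment j| ≤
      2 * (2 ^ j * j.factorial) * √δ := by
  rw [fractInvLogMoment, ← intervalIntegral.integral_add_adjacent_intervals
    (intervalIntegrable_fractInvMulLogPow j le_rfl hδ0 hδ1)
    (intervalIntegrable_fractInvMulLogPow j hδ0 hδ1 le_rfl), abs_sub_comm, add_sub_cancel_right]
  exact abs_integral_le_of_norm_le_rpow_neg_half (by positivity) hδ0
    fun s hs hs' ↦ norm_fractInvMulLogPow_le j hs (hs'.trans hδ1)

lemma one_div_sub_eq_sum_add {K : Type*} [Field K] (J : ℕ) {L v : K} (hL : L ≠ 0)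
    (hv : L - v ≠ 0) : 1 / (L - v) =
      ∑ j ∈ Finset.range J, v ^ j / L ^ (j + 1) + v ^ J / (L ^ J * (L - v)) := by
  induction J with
  | zero => simp
  | succ J ih =>
    rw [Finset.sum_range_succ, ih]
    field_simp
    ring

lemma fractInvMulLogPow_zero_div_eq_sum_add (J : ℕ) {L s : ℝ} (hL : L ≠ 0) (hs : L + log s ≠ 0) :
    fractInvMulLogPow 0 s / (L + log s) =
      ∑ j ∈ Finset.range J, fractInvMulLogPow j s / L ^ (j + 1) +
        fractInvMulLogPow J s / (L ^ J * (L + log s)) := by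
  have hgeom := one_div_sub_eq_sum_add J hL (v := -log s) (by rwa [sub_neg_eq_add])
  rw [sub_neg_eq_add] at hgeom
  simp only [fractInvMulLogPow, pow_zero, mul_one, div_eq_mul_one_div (Int.fract _) (L + _), hgeom,
    mul_add, Finset.mul_sum, mul_div_assoc]

/-- The substitution `t = x s`. -/
lemma integral_floor_div_div_log_eq {x y : ℝ} (hy : 1 < y) (hyx : y ≤ x) :
    ∫ t in y..x, (⌊x / t⌋₊ : ℝ) / log t =
      x * ∫ s in (y / x)..1,
        (1 / (s * (log x + log s)) - fractInvMulLogPow 0 s / (log x + log s)) := by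
  have hx : 0 < x := by linarith
  have hsubst := intervalIntegral.integral_comp_div (a := y) (b := x)
    (fun s ↦ 1 / (s * (log x + log s)) - fractInvMulLogPow 0 s / (log x + log s)) hx.ne'
  rw [div_self hx.ne', smul_eq_mul] at hsubst
  rw [← hsubst]
  refine intervalIntegral.integral_congr fun t ht ↦ ?_
  rw [Set.uIcc_of_le hyx] at ht
  have ht0 : 0 < t := by linarith [ht.1]
  have hlog : log x + log (t / x) = log t := by
    rw [Real.log_div ht0.ne' hx.ne', add_sub_cancel]
  have hlog_pos : 0 < log t := Real.log_pos (by linarith [ht.1])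
  simp only [hlog, fractInvMulLogPow, pow_zero, mul_one, one_div_div]
  rw [← Int.self_sub_floor, natCast_floor_eq_intCast_floor (by positivity)]
  field_simp
  ring

section Window

variable {L δ : ℝ}

lemma continuousOn_add_log_inv (hδ0 : 0 < δ) (hδ1 : δ ≤ 1) (hLδ : 0 < L + log δ) :
    ContinuousOn (fun s ↦ (L + log s)⁻¹) (Set.uIcc δ 1) := by
  rw [Set.uIcc_of_le hδ1]
  intro s hs
  have hlog := Real.log_le_log hδ0 hs.1
  have hne : L + log s ≠ 0 := by linarith
  exact ((continuousAt_const.add (Real.continuousAt_log (hδ0.trans_le hs.1).ne')).inv₀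
    hne).continuousWithinAt

lemma intervalIntegrable_one_div_mul_add_log (hδ0 : 0 < δ) (hδ1 : δ ≤ 1) (hLδ : 0 < L + log δ) :
    IntervalIntegrable (fun s ↦ 1 / (s * (L + log s))) volume δ 1 := by
  have hinv : ContinuousOn (fun s : ℝ ↦ s⁻¹) (Set.uIcc δ 1) := by
    rw [Set.uIcc_of_le hδ1]
    exact fun s hs ↦ (continuousAt_inv₀ (hδ0.trans_le hs.1).ne').continuousWithinAt
  simpa only [one_div, mul_inv] using
    (hinv.fun_mul (continuousOn_add_log_inv hδ0 hδ1 hLδ)).intervalIntegrable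

lemma integral_one_div_mul_add_log (hδ0 : 0 < δ) (hδ1 : δ ≤ 1) (hLδ : 0 < L + log δ) :
    ∫ s in δ..1, 1 / (s * (L + log s)) = log (L / (L + log δ)) := by
  have hL : L ≠ 0 := by linarith [Real.log_nonpos hδ0.le hδ1]
  rw [intervalIntegral.integral_eq_sub_of_hasDerivAt (f := fun s ↦ log (L + log s)) ?_
    (intervalIntegrable_one_div_mul_add_log hδ0 hδ1 hLδ), Real.log_one, add_zero,
    Real.log_div hL hLδ.ne']
  intro s hs
  rw [Set.uIcc_of_le hδ1] at hs
  have hlog := Real.log_le_log hδ0 hs.1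
  have hderiv := ((Real.hasDerivAt_log (hδ0.trans_le hs.1).ne').const_add L).log (by linarith)
  rwa [div_eq_mul_inv, ← mul_inv, ← one_div] at hderiv

lemma intervalIntegrable_fractInvMulLogPow_zero_div (hδ0 : 0 < δ) (hδ1 : δ ≤ 1)
    (hLδ : 0 < L + log δ) :
    IntervalIntegrable (fun s ↦ fractInvMulLogPow 0 s / (L + log s)) volume δ 1 := by
  simpa only [div_eq_mul_inv] using
    (intervalIntegrable_fractInvMulLogPow 0 hδ0.le hδ1 le_rfl).mul_continuousOn
      (continuousOn_add_log_inv hδ0 hδ1 hLδ)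

lemma abs_integral_fractInvMulLogPow_zero_div_sub_sum_le (J : ℕ) (hδ0 : 0 < δ) (hδ1 : δ ≤ 1)
    (hL : 0 < L) (hLδ : L / 2 ≤ L + log δ) :
    |(∫ s in δ..1, fractInvMulLogPow 0 s / (L + log s)) -
      ∑ j ∈ Finset.range J, (∫ s in δ..1, fractInvMulLogPow j s) / L ^ (j + 1)| ≤
      4 * (2 ^ J * J.factorial) / L ^ (J + 1) := by
  have hinteg (j : ℕ) (_ : j ∈ Finset.range J) :
      IntervalIntegrable (fun s ↦ fractInvMulLogPow j s / L ^ (j + 1)) volume δ 1 :=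
    (intervalIntegrable_fractInvMulLogPow j hδ0.le hδ1 le_rfl).div_const _
  have hintegrable_sum : IntervalIntegrable
      (fun s ↦ ∑ j ∈ Finset.range J, fractInvMulLogPow j s / L ^ (j + 1)) volume δ 1 := by
    simpa only [Finset.sum_fn] using IntervalIntegrable.sum (Finset.range J) hinteg
  simp only [← intervalIntegral.integral_div]
  rw [← intervalIntegral.integral_finsetSum hinteg, ← intervalIntegral.integral_sub
    (intervalIntegrable_fractInvMulLogPow_zero_div hδ0 hδ1 (by linarith)) hintegrable_sum]
  have hremainder (s : ℝ) (hδs : δ < s) (hs1 : s ≤ 1) :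
      ‖fractInvMulLogPow 0 s / (L + log s) -
        ∑ j ∈ Finset.range J, fractInvMulLogPow j s / L ^ (j + 1)‖ ≤
      2 * (2 ^ J * J.factorial) / L ^ (J + 1) * s ^ (-(1 / 2) : ℝ) := by
    have hLs : L / 2 ≤ L + log s := hLδ.trans (by gcongr)
    have hLs0 : 0 < L + log s := by linarith
    have hs0 : 0 < s := hδ0.trans hδs
    rw [fractInvMulLogPow_zero_div_eq_sum_add J hL.ne' hLs0.ne', add_sub_cancel_left, norm_div,
      Real.norm_of_nonneg (by positivity : 0 ≤ L ^ J * (L + log s))]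
    calc _ ≤ 2 ^ J * J.factorial * s ^ (-(1 / 2) : ℝ) / (L ^ J * (L / 2)) := by
          gcongr
          exact norm_fractInvMulLogPow_le J hs0 hs1
      _ = _ := by
          field_simp
          ring
  refine (abs_integral_le_of_norm_le_rpow_neg_half (by positivity) hδ1 hremainder).trans_eq ?_
  rw [Real.sqrt_one]
  ring

lemma abs_sum_integral_sub_sum_moment_le (J : ℕ) (hδ0 : 0 ≤ δ) (hδ1 : δ ≤ 1) (hL : 1 ≤ L) :
    |∑ j ∈ Finset.range J, (∫ s in δ..1, fractInvMulLogPow j s) / L ^ (j + 1) -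
      ∑ j ∈ Finset.range J, fractInvLogMoment j / L ^ (j + 1)| ≤
      (∑ j ∈ Finset.range J, 2 * (2 ^ j * j.factorial : ℝ)) * √δ := by
  rw [← Finset.sum_sub_distrib, Finset.sum_mul]
  refine (Finset.abs_sum_le_sum_abs _ _).trans (Finset.sum_le_sum fun j _ ↦ ?_)
  rw [← sub_div, abs_div, abs_of_nonneg (by positivity : 0 ≤ L ^ (j + 1))]
  exact (div_le_self (abs_nonneg _) (one_le_pow₀ hL)).trans
    (abs_integral_fractInvMulLogPow_sub_moment_le j hδ0 hδ1)

end Window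

lemma exists_abs_integral_floor_div_div_log_sub_le (J : ℕ) : ∃ C > 0, ∀ x y : ℝ, 3 ≤ x → √x ≤ y →
    y ≤ x → |(∫ t in y..x, (⌊x / t⌋₊ : ℝ) / log t) / x -
      (log (log x / log y) - ∑ j ∈ Finset.range J, fractInvLogMoment j / log x ^ (j + 1))| ≤
      C * (√(y / x) + 1 / log x ^ (J + 1)) := by
  set A : ℝ := ∑ j ∈ Finset.range J, 2 * (2 ^ j * j.factorial : ℝ)
  set B : ℝ := 4 * (2 ^ J * J.factorial)
  refine ⟨A + B, by positivity, fun x y hx hxy hyx ↦ ?_⟩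
  have hx0 : 0 < x := by linarith
  have hL : 1 ≤ log x := one_le_log_of_three_le hx
  have hy : 1 < y := (Real.lt_sqrt_of_sq_lt (by linarith)).trans_le hxy
  have hδ0 : 0 < y / x := by positivity
  have hδ1 : y / x ≤ 1 := (div_le_one hx0).mpr hyx
  have hLδ : log x + log (y / x) = log y := by
    rw [Real.log_div (by linarith) hx0.ne', add_sub_cancel]
  have hlog_y : log x / 2 ≤ log x + log (y / x) := by
    rw [hLδ, ← Real.log_sqrt hx0.le]
    exact Real.log_le_log (Real.sqrt_pos.mpr hx0) hxy
  rw [integral_floor_div_div_log_eq hy hyx, mul_div_cancel_left₀ _ hx0.ne',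
    intervalIntegral.integral_sub
      (intervalIntegrable_one_div_mul_add_log hδ0 hδ1 (by linarith))
      (intervalIntegrable_fractInvMulLogPow_zero_div hδ0 hδ1 (by linarith)),
    integral_one_div_mul_add_log hδ0 hδ1 (by linarith), hLδ, sub_sub_sub_cancel_left, abs_sub_comm]
  refine (abs_sub_le _ _ _).trans ((add_le_add
    (abs_integral_fractInvMulLogPow_zero_div_sub_sum_le J hδ0 hδ1 (by linarith) hlog_y)
    (abs_sum_integral_sub_sum_moment_le J hδ0.le hδ1 hL)).trans ?_)
  have hA : 0 ≤ A := by positivity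
  have hcross : 0 ≤ A * (1 / log x ^ (J + 1)) + B * √(y / x) := by positivity
  rw [div_eq_mul_one_div]
  linarith

lemma integral_fractInvMulLogPow_zero_between_reciprocals (n : ℕ) :
    ∫ s in (1 / ((n : ℝ) + 2))..(1 / ((n : ℝ) + 1)), fractInvMulLogPow 0 s =
      log (n + 2) - log (n + 1) - 1 / (n + 2) := by
  have hle : 1 / ((n : ℝ) + 2) ≤ 1 / ((n : ℝ) + 1) := by gcongr; norm_num
  have hpos : 0 < 1 / ((n : ℝ) + 2) := by positivity
  have hfract : ∫ s in (1 / ((n : ℝ) + 2))..(1 / ((n : ℝ) + 1)), fractInvMulLogPow 0 s =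
      ∫ s in (1 / ((n : ℝ) + 2))..(1 / ((n : ℝ) + 1)), (s⁻¹ - ((n : ℝ) + 1)) := by
    refine intervalIntegral.integral_congr_ae (Eventually.of_forall fun s hs ↦ ?_)
    rw [Set.uIoc_of_le hle] at hs
    have hs0 : 0 < s := hpos.trans hs.1
    have hfloor : ⌊1 / s⌋ = (n : ℤ) + 1 := by
      rw [Int.floor_eq_iff]
      push_cast
      rw [le_one_div (by positivity) hs0, one_div_lt hs0 (by positivity), add_assoc,
        one_add_one_eq_two]
      exact hs.symm
    rw [fractInvMulLogPow, pow_zero, mul_one, ← Int.self_sub_floor, hfloor, one_div]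
    push_cast
    rfl
  have hinteg : IntervalIntegrable (fun s : ℝ ↦ s⁻¹) volume (1 / ((n : ℝ) + 2))
      (1 / ((n : ℝ) + 1)) :=
    intervalIntegral.intervalIntegrable_inv
      (fun s hs ↦ by rw [Set.uIcc_of_le hle] at hs; exact (hpos.trans_le hs.1).ne') continuousOn_id
  rw [hfract, intervalIntegral.integral_sub hinteg intervalIntegrable_const,
    integral_inv_of_pos hpos (by positivity), intervalIntegral.integral_const, smul_eq_mul,
    div_div_div_cancel_left' _ _ one_ne_zero, Real.log_div (by positivity) (by positivity)]
  field_simp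
  ring

lemma integral_fractInvMulLogPow_zero (n : ℕ) :
    ∫ s in (1 / ((n : ℝ) + 1))..1, fractInvMulLogPow 0 s =
      1 - ((harmonic (n + 1) : ℝ) - log (n + 1)) := by
  induction n with
  | zero => simp
  | succ n ih =>
    have hle : 1 / ((n : ℝ) + 2) ≤ 1 / ((n : ℝ) + 1) := by gcongr; norm_num
    have hle_one : 1 / ((n : ℝ) + 1) ≤ 1 := (div_le_one (by positivity)).mpr (by simp)
    have hsucc : ((n + 1 : ℕ) : ℝ) + 1 = n + 2 := by push_cast; ring
    rw [hsucc, ← intervalIntegral.integral_add_adjacent_intervals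
      (intervalIntegrable_fractInvMulLogPow 0 (by positivity) hle hle_one)
      (intervalIntegrable_fractInvMulLogPow 0 (by positivity) hle_one le_rfl), ih,
      integral_fractInvMulLogPow_zero_between_reciprocals, harmonic_succ (n + 1)]
    push_cast
    ring

lemma fractInvLogMoment_zero : fractInvLogMoment 0 = 1 - eulerMascheroniConstant := by
  have hmoment : Tendsto (fun n : ℕ ↦ ∫ s in (1 / ((n : ℝ) + 1))..1, fractInvMulLogPow 0 s) atTop
      (nhds (fractInvLogMoment 0)) := by
    rw [tendsto_iff_norm_sub_tendsto_zero]
    have hlim : Tendsto (fun n : ℕ ↦ 2 * (2 ^ 0 * (Nat.factorial 0 : ℝ)) * √(1 / ((n : ℝ) + 1)))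
        atTop (nhds 0) := by
      simpa using (tendsto_one_div_add_atTop_nhds_zero_nat (𝕜 := ℝ)).sqrt.const_mul 2
    exact squeeze_zero (fun n ↦ norm_nonneg _)
      (fun n ↦ abs_integral_fractInvMulLogPow_sub_moment_le 0 (by positivity)
        ((div_le_one (by positivity)).mpr (by simp))) hlim
  have hgamma : Tendsto (fun n : ℕ ↦ 1 - ((harmonic (n + 1) : ℝ) - log ((n + 1 : ℕ) : ℝ))) atTop
      (nhds (1 - eulerMascheroniConstant)) :=
    (Real.tendsto_harmonic_sub_log.comp (tendsto_add_atTop_nat 1)).const_sub 1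
  simp only [integral_fractInvMulLogPow_zero] at hmoment
  push_cast at hgamma
  exact tendsto_nhds_unique hmoment hgamma

end IntegralExpansion

/-! ### The equation for the median -/

section MedianEquation

lemma rpow_neg_le_div_log_pow (m : ℕ) {a x : ℝ} (ha : 0 < a) (hx : 1 < x) :
    x ^ (-a) ≤ a⁻¹ ^ m * m.factorial / log x ^ m := by
  have hx0 : 0 < x := by linarith
  have hlog := Real.log_pos hx
  have h := log_pow_le_factorial_mul m (Real.one_le_rpow hx.le ha.le)
  rw [Real.log_rpow hx0, mul_pow] at h
  rw [Real.rpow_neg hx0.le, inv_le_comm₀ (by positivity) (by positivity), inv_div,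
    div_le_iff₀ (by positivity), inv_pow]
  field_simp
  linarith

lemma exists_abs_largePrimeMultipleCount_div_sub_sum_div_le (K : ℕ) :
    ∃ C > 0, ∀ x : ℝ, 10000 ≤ x → ∀ y : ℕ, √x ≤ y →
      |(largePrimeMultipleCount ⌊x⌋₊ y : ℝ) / x -
        (∑ n ∈ Finset.Ioc y ⌊x⌋₊, ((⌊x⌋₊ / n : ℕ) : ℝ) / log n) / x| ≤ C / log x ^ K := by
  obtain ⟨C, hC, hcount⟩ := exists_abs_largePrimeMultipleCount_sub_sum_le (K + 1)
  refine ⟨C * 2 ^ (K + 2), by positivity, fun x hx y hxy ↦ ?_⟩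
  have hx0 : 0 < x := by linarith
  have hlog : 1 ≤ log x := one_le_log_of_three_le (by linarith)
  have hsqrt : 100 ≤ √x := Real.le_sqrt_of_sq_le (by linarith)
  have hy : 100 ≤ y := by exact_mod_cast hsqrt.trans hxy
  have hlog_y : log x / 2 ≤ log y := by
    rw [← Real.log_sqrt hx0.le]
    exact Real.log_le_log (by linarith) hxy
  have hN : (1 : ℝ) ≤ ⌊x⌋₊ := by exact_mod_cast Nat.le_floor (by push_cast; linarith)
  have hNx : (⌊x⌋₊ : ℝ) ≤ x := Nat.floor_le hx0.le
  have hlog_N : 1 + log ⌊x⌋₊ ≤ 2 * log x := by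
    linarith [Real.log_le_log (by linarith) hNx]
  rw [← sub_div, abs_div, abs_of_pos hx0, div_le_iff₀ hx0]
  calc _ ≤ C * ⌊x⌋₊ * (1 + log ⌊x⌋₊) / log y ^ (K + 1) := hcount ⌊x⌋₊ y hy
    _ ≤ C * x * (2 * log x) / (log x / 2) ^ (K + 1) := by gcongr
    _ = _ := by
        rw [div_pow]
        field_simp
        ring

lemma abs_sum_div_sub_integral_div_le {x : ℝ} {y : ℕ} (hx : 9 ≤ x) (hxy : √x ≤ y)
    (hyx : (y : ℝ) ≤ x) :
    |(∑ n ∈ Finset.Ioc y ⌊x⌋₊, ((⌊x⌋₊ / n : ℕ) : ℝ) / log n) / x -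
      (∫ t in (y : ℝ)..x, (⌊x / t⌋₊ : ℝ) / log t) / x| ≤ 2 * x ^ (-(1 / 2) : ℝ) := by
  have hx0 : 0 < x := by linarith
  have hsqrt : 3 ≤ √x := Real.le_sqrt_of_sq_le (by linarith)
  have hy : 3 ≤ y := by exact_mod_cast hsqrt.trans hxy
  have hquot : x / y ≤ √x := by
    calc x / y ≤ x / √x := by gcongr
      _ = √x := Real.div_sqrt
  rw [← sub_div, abs_div, abs_of_pos hx0, div_le_iff₀ hx0]
  calc _ ≤ x / y + 1 := abs_sum_natDiv_div_log_sub_integral_le hy hyx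
    _ ≤ 2 * √x := by linarith
    _ = 2 * (x ^ (-(1 / 2) : ℝ) * x) := by
        rw [← Real.rpow_add_one hx0.ne', Real.sqrt_eq_rpow]
        norm_num
    _ = _ := by ring

lemma sqrt_div_le_rpow_neg_eighth {x y : ℝ} (hx : 0 < x) (hyx : y ≤ x ^ (3 / 4 : ℝ)) :
    √(y / x) ≤ x ^ (-(1 / 8) : ℝ) := by
  rw [Real.sqrt_le_left (by positivity), ← Real.rpow_mul_natCast hx.le, div_le_iff₀ hx,
    ← Real.rpow_add_one hx.ne']
  norm_num at hyx ⊢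
  exact hyx

lemma exists_abs_largePrimeMultipleCount_div_sub_le (J : ℕ) :
    ∃ C > 0, ∀ x : ℝ, 10000 ≤ x → ∀ y : ℕ, √x ≤ y → (y : ℝ) ≤ x ^ (3 / 4 : ℝ) →
      |(largePrimeMultipleCount ⌊x⌋₊ y : ℝ) / x - (log (log x / log y) -
        ∑ j ∈ Finset.range J, fractInvLogMoment j / log x ^ (j + 1))| ≤ C / log x ^ (J + 1) := by
  obtain ⟨A, hA, hprimes⟩ := exists_abs_largePrimeMultipleCount_div_sub_sum_div_le (J + 1)
  obtain ⟨B, hB, hintegral⟩ := exists_abs_integral_floor_div_div_log_sub_le J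
  set D : ℝ := (1 / 2)⁻¹ ^ (J + 1) * (J + 1).factorial
  set E : ℝ := (1 / 8)⁻¹ ^ (J + 1) * (J + 1).factorial
  refine ⟨A + 2 * D + B * (E + 1), by positivity, fun x hx y hxy hyx34 ↦ ?_⟩
  have hhalf : x ^ (-(1 / 2) : ℝ) ≤ D / log x ^ (J + 1) :=
    rpow_neg_le_div_log_pow (J + 1) (by norm_num) (by linarith)
  have heighth : x ^ (-(1 / 8) : ℝ) ≤ E / log x ^ (J + 1) :=
    rpow_neg_le_div_log_pow (J + 1) (by norm_num) (by linarith)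
  have hyx : (y : ℝ) ≤ x := hyx34.trans <|
    (Real.rpow_le_rpow_of_exponent_le (by linarith) (by norm_num)).trans_eq (Real.rpow_one x)
  have hroot := (sqrt_div_le_rpow_neg_eighth (by linarith) hyx34).trans heighth
  calc _ ≤ A / log x ^ (J + 1) + (2 * x ^ (-(1 / 2) : ℝ) +
          B * (√(y / x) + 1 / log x ^ (J + 1))) :=
        (abs_sub_le _ _ _).trans (add_le_add (hprimes x hx y hxy) ((abs_sub_le _ _ _).trans
          (add_le_add (abs_sum_div_sub_integral_div_le (by linarith) hxy hyx)
            (hintegral x y (by linarith) hxy hyx))))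
    _ ≤ A / log x ^ (J + 1) + (2 * (D / log x ^ (J + 1)) +
          B * (E / log x ^ (J + 1) + 1 / log x ^ (J + 1))) := by gcongr
    _ = _ := by ring

lemma medianLPF_le_iff_two_mul_largePrimeMultipleCount_le {x : ℝ} {y : ℕ} (hx : 1 ≤ ⌊x⌋₊)
    (hy : 1 ≤ y) (hxy : ⌊x⌋₊ < (y + 1) ^ 2) :
    medianLPF x ≤ y ↔ 2 * largePrimeMultipleCount ⌊x⌋₊ y ≤ ⌊x⌋₊ := by
  have hsplit := smoothCount_add_largePrimeMultipleCount hy hxy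
  rw [medianLPF_le_iff hx]
  omega

lemma floor_lt_sq_of_sqrt_lt {x : ℝ} {m : ℕ} (hx : 0 ≤ x) (hxz : √x < m) : ⌊x⌋₊ < m ^ 2 := by
  rw [Nat.floor_lt hx]
  push_cast
  exact Real.lt_sq_of_sqrt_lt hxz

lemma eventually_rpow_add_one_le {a b : ℝ} (ha : 0 < a) (hab : a < b) :
    ∀ᶠ x : ℝ in atTop, x ^ a + 1 ≤ x ^ b := by
  filter_upwards [(tendsto_rpow_atTop (sub_pos.mpr hab)).eventually_ge_atTop 2,
    eventually_ge_atTop (1 : ℝ)] with x hgap hx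
  have hone : 1 ≤ x ^ a := Real.one_le_rpow hx ha.le
  calc x ^ a + 1 ≤ x ^ a * 2 := by linarith
    _ ≤ x ^ a * x ^ (b - a) := by gcongr
    _ = x ^ b := by rw [← Real.rpow_add (by linarith), add_sub_cancel]

lemma one_half_lt_log_nine_fifths : 1 / 2 < log (9 / 5) := by
  have h : 1 < log ((9 / 5) ^ 2) := by
    rw [Real.lt_log_iff_exp_lt (by norm_num)]
    linarith [Real.exp_one_lt_d9]
  rw [Real.log_pow] at h
  push_cast at h
  linarith

lemma log_three_halves_lt_one_half : log (3 / 2) < 1 / 2 := by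
  have h : log ((3 / 2) ^ 2) < 1 := by
    rw [Real.log_lt_iff_lt_exp (by norm_num)]
    linarith [Real.exp_one_gt_d9]
  rw [Real.log_pow] at h
  push_cast at h
  linarith

lemma exists_abs_largePrimeMultipleCount_div_sub_log_le :
    ∃ C > 0, ∀ x : ℝ, 10000 ≤ x → ∀ y : ℕ, √x ≤ y → (y : ℝ) ≤ x ^ (3 / 4 : ℝ) →
      |(largePrimeMultipleCount ⌊x⌋₊ y : ℝ) / x - log (log x / log y)| ≤ C / log x := by
  simpa using exists_abs_largePrimeMultipleCount_div_sub_le 0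

lemma tendsto_const_div_log_atTop (C : ℝ) : Tendsto (fun x ↦ C / log x) atTop (nhds 0) :=
  tendsto_const_nhds.div_atTop Real.tendsto_log_atTop

lemma eventually_sqrt_lt_medianLPF : ∀ᶠ x : ℝ in atTop, √x < medianLPF x := by
  obtain ⟨C, -, hcount⟩ := exists_abs_largePrimeMultipleCount_div_sub_log_le
  filter_upwards [eventually_ge_atTop (10000 : ℝ),
    eventually_rpow_add_one_le (a := 1 / 2) (b := 5 / 9) (by norm_num) (by norm_num),
    (tendsto_const_div_log_atTop C).eventually_lt_const
      (sub_pos.mpr one_half_lt_log_nine_fifths)] with x hx hpow hsmall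
  have hx0 : 0 < x := by linarith
  have hsqrt : 100 ≤ √x := Real.le_sqrt_of_sq_le (by linarith)
  rw [← Real.sqrt_eq_rpow] at hpow
  have hceil : √x ≤ ⌈√x⌉₊ := Nat.le_ceil _
  have hceil' : (⌈√x⌉₊ : ℝ) ≤ x ^ (5 / 9 : ℝ) :=
    (Nat.ceil_lt_add_one (Real.sqrt_nonneg x)).le.trans hpow
  have hlog_pos : 0 < log ⌈√x⌉₊ := Real.log_pos (by linarith)
  have hlog : log ⌈√x⌉₊ ≤ 5 / 9 * log x := by
    rw [← Real.log_rpow hx0]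
    exact Real.log_le_log (by linarith) hceil'
  have hratio : log (9 / 5) ≤ log (log x / log ⌈√x⌉₊) := by
    refine Real.log_le_log (by norm_num) ?_
    rw [le_div_iff₀ hlog_pos]
    linarith
  have hmany : 1 / 2 < (largePrimeMultipleCount ⌊x⌋₊ ⌈√x⌉₊ : ℝ) / x := by
    have hclose := hcount x hx ⌈√x⌉₊ hceil
      (hceil'.trans (Real.rpow_le_rpow_of_exponent_le (by linarith) (by norm_num)))
    linarith [(abs_le.mp hclose).1]
  rw [lt_div_iff₀ hx0] at hmany
  refine hceil.trans_lt (Nat.cast_lt.mpr ?_)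
  rw [← not_le, medianLPF_le_iff_two_mul_largePrimeMultipleCount_le
    (Nat.le_floor (by push_cast; linarith)) (Nat.one_le_ceil_iff.mpr (by linarith))
    (floor_lt_sq_of_sqrt_lt hx0.le (by push_cast; linarith)), not_le, ← @Nat.cast_lt ℝ]
  push_cast
  linarith [Nat.floor_le hx0.le]

lemma eventually_medianLPF_le_rpow : ∀ᶠ x : ℝ in atTop, (medianLPF x : ℝ) ≤ x ^ (3 / 4 : ℝ) := by
  obtain ⟨C, -, hcount⟩ := exists_abs_largePrimeMultipleCount_div_sub_log_le
  have hlim : Tendsto (fun x : ℝ ↦ C / log x + 1 / x) atTop (nhds 0) := by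
    simpa using (tendsto_const_div_log_atTop C).add tendsto_inv_atTop_zero
  filter_upwards [eventually_ge_atTop (10000 : ℝ),
    eventually_rpow_add_one_le (a := 2 / 3) (b := 3 / 4) (by norm_num) (by norm_num),
    hlim.eventually_lt_const (sub_pos.mpr log_three_halves_lt_one_half)] with x hx hpow hsmall
  have hx0 : 0 < x := by linarith
  have hlog_x : 0 < log x := Real.log_pos (by linarith)
  have hsqrt : 100 ≤ √x := Real.le_sqrt_of_sq_le (by linarith)
  set y := ⌊x ^ (3 / 4 : ℝ)⌋₊
  have hyx : (y : ℝ) ≤ x ^ (3 / 4 : ℝ) := Nat.floor_le (by positivity)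
  have hy : x ^ (2 / 3 : ℝ) ≤ y := by linarith [Nat.lt_floor_add_one (x ^ (3 / 4 : ℝ))]
  have hxy : √x ≤ y := by
    rw [Real.sqrt_eq_rpow]
    exact (Real.rpow_le_rpow_of_exponent_le (by linarith) (by norm_num)).trans hy
  have hlog : 2 / 3 * log x ≤ log y := by
    rw [← Real.log_rpow hx0]
    exact Real.log_le_log (by positivity) hy
  have hratio : log (log x / log y) ≤ log (3 / 2) := by
    have hlog_y : 0 < log y := by linarith
    refine Real.log_le_log (by positivity) ?_
    rw [div_le_iff₀ hlog_y]
    linarith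
  have hfew : (largePrimeMultipleCount ⌊x⌋₊ y : ℝ) / x + 1 / x < 1 / 2 := by
    linarith [(abs_le.mp (hcount x hx y hxy hyx)).2]
  rw [← add_div, div_lt_iff₀ hx0] at hfew
  refine le_trans (Nat.cast_le.mpr ?_) hyx
  rw [medianLPF_le_iff_two_mul_largePrimeMultipleCount_le
    (Nat.le_floor (by push_cast; linarith)) (by exact_mod_cast (by linarith : (1 : ℝ) ≤ y))
    (floor_lt_sq_of_sqrt_lt hx0.le (by push_cast; linarith)), ← @Nat.cast_le ℝ]
  push_cast
  linarith [Nat.lt_floor_add_one x]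

lemma abs_largePrimeMultipleCount_medianLPF_sub_le {x : ℝ} (hx : 4 ≤ x) (hxM : √x < medianLPF x) :
    |(largePrimeMultipleCount ⌊x⌋₊ (medianLPF x) : ℝ) - x / 2| ≤ 2 * √x := by
  have hx0 : 0 ≤ x := by linarith
  have hsqrt : 2 ≤ √x := Real.le_sqrt_of_sq_le (by linarith)
  have hN : 1 ≤ ⌊x⌋₊ := Nat.le_floor (by push_cast; linarith)
  have hM : 2 < medianLPF x := by exact_mod_cast hsqrt.trans_lt hxM
  obtain ⟨y, hyM⟩ : ∃ y, medianLPF x = y + 1 := ⟨medianLPF x - 1, by omega⟩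
  have hupper : 2 * largePrimeMultipleCount ⌊x⌋₊ (medianLPF x) ≤ ⌊x⌋₊ :=
    (medianLPF_le_iff_two_mul_largePrimeMultipleCount_le hN (by omega)
      (floor_lt_sq_of_sqrt_lt hx0 (by push_cast; linarith))).mp le_rfl
  have hlower : ⌊x⌋₊ < 2 * largePrimeMultipleCount ⌊x⌋₊ y := by
    rw [← not_le, ← medianLPF_le_iff_two_mul_largePrimeMultipleCount_le hN (by omega)
      (floor_lt_sq_of_sqrt_lt hx0 (by rwa [← hyM]))]
    omega
  have hstep : ⌊x⌋₊ < 2 * (largePrimeMultipleCount ⌊x⌋₊ (medianLPF x) + ⌊x⌋₊ / medianLPF x) := by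
    have h := largePrimeMultipleCount_le_succ_add_div ⌊x⌋₊ y
    rw [← hyM] at h
    omega
  have hquot : ((⌊x⌋₊ / medianLPF x : ℕ) : ℝ) ≤ √x := by
    calc _ ≤ (⌊x⌋₊ : ℝ) / medianLPF x := Nat.cast_div_le
      _ ≤ x / √x := by
          gcongr
          exact Nat.floor_le hx0
      _ = √x := Real.div_sqrt
  have hupper' : 2 * (largePrimeMultipleCount ⌊x⌋₊ (medianLPF x) : ℝ) ≤ ⌊x⌋₊ := by
    exact_mod_cast hupper
  have hstep' : (⌊x⌋₊ : ℝ) < 2 * (largePrimeMultipleCount ⌊x⌋₊ (medianLPF x) +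
      (⌊x⌋₊ / medianLPF x : ℕ)) := by exact_mod_cast hstep
  rw [abs_le]
  constructor <;> linarith [Nat.floor_le hx0, Nat.lt_floor_add_one x]

lemma isBigO_log_log_div_log_medianLPF_sub (J : ℕ) :
    (fun x : ℝ ↦ log (log x / log (medianLPF x)) - 1 / 2 -
      ∑ j ∈ Finset.range J, fractInvLogMoment j / log x ^ (j + 1)) =O[atTop]
      fun x ↦ (log x)⁻¹ ^ (J + 1) := by
  obtain ⟨C, -, hcount⟩ := exists_abs_largePrimeMultipleCount_div_sub_le J
  set D : ℝ := (1 / 2)⁻¹ ^ (J + 1) * (J + 1).factorial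
  refine Asymptotics.IsBigO.of_bound (C + 2 * D) ?_
  filter_upwards [eventually_ge_atTop (10000 : ℝ), eventually_sqrt_lt_medianLPF,
    eventually_medianLPF_le_rpow] with x hx hlower hupper
  have hx0 : 0 < x := by linarith
  have hlog : 0 < log x := Real.log_pos (by linarith)
  have hexpand := hcount x hx _ hlower.le hupper
  have hhalf : |(largePrimeMultipleCount ⌊x⌋₊ (medianLPF x) : ℝ) / x - 1 / 2| ≤
      2 * D / log x ^ (J + 1) := by
    calc _ = |(largePrimeMultipleCount ⌊x⌋₊ (medianLPF x) : ℝ) - x / 2| / x := by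
          rw [← abs_of_pos hx0, ← abs_div, abs_of_pos hx0]
          congr 1
          field_simp
      _ ≤ 2 * √x / x := by
          gcongr
          exact abs_largePrimeMultipleCount_medianLPF_sub_le (by linarith) hlower
      _ = 2 * x ^ (-(1 / 2) : ℝ) := by
          rw [Real.rpow_neg hx0.le, ← Real.sqrt_eq_rpow, mul_div_assoc, Real.sqrt_div_self']
          ring
      _ ≤ 2 * (D / log x ^ (J + 1)) := by
          gcongr
          exact rpow_neg_le_div_log_pow (J + 1) (by norm_num) (by linarith)
      _ = _ := by ring
  rw [Real.norm_eq_abs, Real.norm_of_nonneg (by positivity), inv_pow, ← div_eq_mul_inv, add_div]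
  rw [abs_le] at hexpand hhalf ⊢
  constructor <;> linarith

end MedianEquation

/-! ### Inverting the equation -/

section Inversion

open Asymptotics

variable {c : ℕ → ℝ} {J n : ℕ} {κ : ℝ}

/-- The polynomial `c₀ u + ⋯ + c_{J-1} u^J` approximating `log (log x / log M) - κ` at
`u = 1 / log x`, where `M ≈ x ^ exp (-κ)` is the quantity being expanded. -/
noncomputable def logRatioPoly (c : ℕ → ℝ) (J : ℕ) (u : ℝ) : ℝ :=
  ∑ j ∈ Finset.range J, c j * u ^ (j + 1)

/-- The value of `M / x ^ α` at `u = 1 / log x` when `log M = α exp (-logRatioPoly c J u) log x`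
holds exactly. It is `exp (α (exp (-logRatioPoly c J u) - 1) / u)`; `dslope` fills the removable
singularity at `u = 0`. -/
noncomputable def inversionFactor (c : ℕ → ℝ) (J : ℕ) (α u : ℝ) : ℝ :=
  exp (α * dslope (fun v ↦ exp (-logRatioPoly c J v)) 0 u)

lemma logRatioPoly_zero : logRatioPoly c J 0 = 0 := by simp [logRatioPoly]

lemma hasDerivAt_logRatioPoly_zero : HasDerivAt (logRatioPoly c (n + 1)) (c 0) 0 := by
  have h : HasDerivAt (logRatioPoly c (n + 1))
      (∑ j ∈ Finset.range (n + 1), c j * (((j + 1 : ℕ) : ℝ) * (0 : ℝ) ^ j)) 0 :=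
    HasDerivAt.fun_sum fun j _ ↦ (hasDerivAt_pow (j + 1) (0 : ℝ)).const_mul (c j)
  rw [Finset.sum_range_succ'] at h
  simpa using h

lemma analyticAt_exp_neg_logRatioPoly : AnalyticAt ℝ (fun v ↦ exp (-logRatioPoly c J v)) 0 := by
  unfold logRatioPoly
  fun_prop

lemma analyticAt_inversionFactor (α : ℝ) : AnalyticAt ℝ (inversionFactor c J α) 0 := by
  obtain ⟨p, hp⟩ := analyticAt_exp_neg_logRatioPoly (c := c) (J := J)
  have hdslope : AnalyticAt ℝ (dslope (fun v ↦ exp (-logRatioPoly c J v)) 0) 0 :=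
    ⟨_, hp.has_fpower_series_dslope_fslope⟩
  exact (analyticAt_const.mul hdslope).rexp

lemma inversionFactor_zero (α : ℝ) : inversionFactor c (n + 1) α 0 = exp (-(α * c 0)) := by
  have hderiv := (hasDerivAt_logRatioPoly_zero (c := c) (n := n)).fun_neg.exp.deriv
  simp only [logRatioPoly_zero, neg_zero, Real.exp_zero, one_mul] at hderiv
  rw [inversionFactor, dslope_same, hderiv, mul_neg]

lemma inversionFactor_inv (α : ℝ) {L : ℝ} (hL : L ≠ 0) :
    inversionFactor c J α L⁻¹ = exp (α * L * (exp (-logRatioPoly c J L⁻¹) - 1)) := by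
  rw [inversionFactor, dslope_of_ne _ (inv_ne_zero hL), slope_def_field, logRatioPoly_zero,
    neg_zero, Real.exp_zero, sub_zero, div_inv_eq_mul]
  ring_nf

lemma exists_isBigO_sub_mul_one_add_sum {f : ℝ → ℝ} (hf : AnalyticAt ℝ f 0) (hf0 : f 0 ≠ 0)
    (n : ℕ) : ∃ d : ℕ → ℝ,
      (fun u ↦ f u - f 0 * (1 + ∑ i ∈ Finset.Icc 1 n, d i * u ^ i)) =O[nhds 0]
        fun u ↦ u ^ (n + 1) := by
  obtain ⟨p, hp⟩ := hf
  refine ⟨fun i ↦ p.coeff i / f 0, ?_⟩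
  have hpartial (u : ℝ) : p.partialSum (n + 1) u =
      f 0 * (1 + ∑ i ∈ Finset.Icc 1 n, p.coeff i / f 0 * u ^ i) := by
    have hcoeff : p.coeff 0 = f 0 := hp.coeff_zero _
    simp only [FormalMultilinearSeries.partialSum, FormalMultilinearSeries.apply_eq_pow_smul_coeff,
      smul_eq_mul]
    rw [Finset.range_eq_Ico, Finset.sum_eq_sum_Ico_succ_bot n.succ_pos, hcoeff, pow_zero, one_mul,
      mul_add, mul_one, Finset.mul_sum]
    refine congrArg _ (Finset.sum_congr rfl fun i _ ↦ ?_)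
    field_simp
  have htaylor := hp.isBigO_sub_partialSum_pow (n + 1)
  simp only [zero_add, hpartial, ← norm_pow] at htaylor
  exact htaylor.of_norm_right

lemma isBigO_exp_sub_one {α : Type*} {l : Filter α} {f : α → ℝ} (hf : Tendsto f l (nhds 0)) :
    (fun a ↦ exp (f a) - 1) =O[l] f := by
  simpa [Function.comp_def] using (Real.hasDerivAt_exp 0).isBigO_sub.comp_tendsto hf

lemma div_rpow_eq_inversionFactor_mul {x M : ℝ} (hx : 1 < x) (hM : 1 < M) :
    M / x ^ exp (-κ) = inversionFactor c J (exp (-κ)) (log x)⁻¹ *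
      exp (exp (-κ) * log x * exp (-logRatioPoly c J (log x)⁻¹) *
        (exp (-(log (log x / log M) - κ - logRatioPoly c J (log x)⁻¹)) - 1)) := by
  have hx0 : 0 < x := by linarith
  have hlog_x := Real.log_pos hx
  have hlog_M := Real.log_pos hM
  set Q := logRatioPoly c J (log x)⁻¹ with hQ
  have hlog : log M = exp (-κ) * log x * exp (-Q) * exp (-(log (log x / log M) - κ - Q)) := by
    calc log M = log x * exp (-log (log x / log M)) := by
          rw [← Real.log_inv, Real.exp_log (by positivity)]
          field_simp
      _ = log x * exp (-κ + -Q + -(log (log x / log M) - κ - Q)) := by ring_nf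
      _ = _ := by
          rw [Real.exp_add, Real.exp_add]
          ring
  rw [inversionFactor_inv _ hlog_x.ne', ← hQ, ← Real.exp_add, Real.rpow_def_of_pos hx0]
  nth_rewrite 1 [← Real.exp_log (by linarith : 0 < M)]
  rw [← Real.exp_sub]
  nth_rewrite 1 [hlog]
  ring_nf

lemma tendsto_inv_log_atTop : Tendsto (fun x ↦ (log x)⁻¹) atTop (nhds 0) :=
  tendsto_inv_atTop_zero.comp Real.tendsto_log_atTop

lemma isBigO_exp_mul_exp_neg_sub_one_sub_one {f r : ℝ → ℝ} (hf : f =O[atTop] (1 : ℝ → ℝ))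
    (hr : r =O[atTop] fun x ↦ (log x)⁻¹ ^ (n + 2)) :
    (fun x ↦ exp (f x * log x * (exp (-r x) - 1)) - 1) =O[atTop] fun x ↦ (log x)⁻¹ ^ (n + 1) := by
  have hpow (k : ℕ) : Tendsto (fun x ↦ (log x)⁻¹ ^ (k + 1)) atTop (nhds 0) := by
    simpa using tendsto_inv_log_atTop.pow (k + 1)
  have hexp : (fun x ↦ exp (-r x) - 1) =O[atTop] fun x ↦ (log x)⁻¹ ^ (n + 2) :=
    (isBigO_exp_sub_one (by simpa using (hr.trans_tendsto (hpow (n + 1))).neg)).trans hr.neg_left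
  have hprod : (fun x ↦ f x * log x * (exp (-r x) - 1)) =O[atTop] fun x ↦ (log x)⁻¹ ^ (n + 1) := by
    refine ((hf.mul (isBigO_refl _ _)).mul hexp).congr' EventuallyEq.rfl ?_
    filter_upwards [eventually_gt_atTop 1] with x hx
    have hlog := Real.log_pos hx
    rw [Pi.one_apply, one_mul, pow_succ' _ (n + 1), mul_inv_cancel_left₀ hlog.ne']
  exact (isBigO_exp_sub_one (hprod.trans_tendsto (hpow n))).trans hprod

lemma exists_isBigO_div_rpow_sub {M : ℝ → ℝ} (hM : ∀ᶠ x in atTop, 1 < M x)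
    (hr : (fun x ↦ log (log x / log (M x)) - κ - logRatioPoly c (n + 1) (log x)⁻¹) =O[atTop]
      fun x ↦ (log x)⁻¹ ^ (n + 2)) :
    ∃ d : ℕ → ℝ, (fun x ↦ M x / (exp (-(exp (-κ) * c 0)) * x ^ exp (-κ)) -
      (1 + ∑ i ∈ Finset.Icc 1 n, d i / log x ^ i)) =O[atTop] fun x ↦ (log x)⁻¹ ^ (n + 1) := by
  set H := inversionFactor c (n + 1) (exp (-κ))
  have hH0 : H 0 = exp (-(exp (-κ) * c 0)) := inversionFactor_zero _
  have hH0' : H 0 ≠ 0 := (Real.exp_pos _).ne'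
  have hHan : AnalyticAt ℝ H 0 := analyticAt_inversionFactor _
  obtain ⟨d, hd⟩ := exists_isBigO_sub_mul_one_add_sum hHan hH0' n
  set ρ : ℝ → ℝ := fun x ↦ exp (-κ) * log x * exp (-logRatioPoly c (n + 1) (log x)⁻¹) *
    (exp (-(log (log x / log (M x)) - κ - logRatioPoly c (n + 1) (log x)⁻¹)) - 1) with hρ
  have hbounded : (fun x ↦ exp (-κ) * exp (-logRatioPoly c (n + 1) (log x)⁻¹)) =O[atTop]
      (1 : ℝ → ℝ) :=
    ((analyticAt_exp_neg_logRatioPoly.continuousAt.tendsto.comp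
      tendsto_inv_log_atTop).const_mul _).isBigO_one ℝ
  have herror : (fun x ↦ H (log x)⁻¹ * (exp (ρ x) - 1)) =O[atTop] fun x ↦ (log x)⁻¹ ^ (n + 1) := by
    have hexp := isBigO_exp_mul_exp_neg_sub_one_sub_one hbounded hr
    have hH1 : (fun x ↦ H (log x)⁻¹) =O[atTop] (1 : ℝ → ℝ) :=
      (hHan.continuousAt.tendsto.comp tendsto_inv_log_atTop).isBigO_one ℝ
    refine (hH1.mul hexp).congr (fun x ↦ ?_) fun x ↦ one_mul _
    simp only [hρ]
    ring_nf
  refine ⟨d, ((herror.add (hd.comp_tendsto tendsto_inv_log_atTop)).const_mul_left (H 0)⁻¹).congr' ?_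
    EventuallyEq.rfl⟩
  filter_upwards [eventually_gt_atTop 1, hM] with x hx hMx
  have hmain : M x / x ^ exp (-κ) = H (log x)⁻¹ * exp (ρ x) :=
    div_rpow_eq_inversionFactor_mul hx hMx
  rw [← hH0, div_mul_eq_div_div_swap, hmain]
  simp only [Function.comp_apply, inv_pow, ← div_eq_mul_inv]
  field_simp
  ring

end Inversion

theorem median_largest_prime_factor_expansion :
    ∀ n : ℕ, 1 ≤ n → ∃ d : ℕ → ℝ, ∃ C > (0:ℝ), ∀ᶠ x : ℝ in atTop,
      |(medianLPF x : ℝ) /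
          (Real.exp ((Real.eulerMascheroniConstant - 1) / Real.sqrt (Real.exp 1)) *
            x ^ (1 / Real.sqrt (Real.exp 1))) -
          (1 + ∑ i ∈ Finset.Icc 1 n, d i / (Real.log x) ^ i)| ≤
        C / (Real.log x) ^ (n + 1) := by
  intro n _
  have hmedian : ∀ᶠ x : ℝ in atTop, 1 < (medianLPF x : ℝ) := by
    filter_upwards [eventually_sqrt_lt_medianLPF, eventually_ge_atTop 1] with x hx hx1
    exact (Real.one_le_sqrt.mpr hx1).trans_lt hx
  have hequation := isBigO_log_log_div_log_medianLPF_sub (n + 1)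
  simp only [div_eq_mul_inv (fractInvLogMoment _), ← inv_pow] at hequation
  obtain ⟨d, hd⟩ := exists_isBigO_div_rpow_sub hmedian hequation
  obtain ⟨C, hC, hbound⟩ := hd.exists_pos
  have hexponent : exp (-(1 / 2)) = 1 / √(exp 1) := by
    rw [Real.exp_neg, Real.exp_half, one_div]
  have hfactor : -(1 / √(exp 1) * fractInvLogMoment 0) =
      (eulerMascheroniConstant - 1) / √(exp 1) := by
    rw [fractInvLogMoment_zero]
    ring
  refine ⟨d, C, hC, ?_⟩
  filter_upwards [hbound.bound, eventually_gt_atTop 1] with x hx hx1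
  have hlog := Real.log_pos hx1
  rwa [hexponent, hfactor, Real.norm_eq_abs, Real.norm_of_nonneg (by positivity), inv_pow,
    ← div_eq_mul_inv] at hx
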